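/- arXiv:2009.12685 — 5 statements merged into one kernel-verified Lean document; each statement's English description precedes it below -/
import Mathlib

section
/- Let d ≥ 2 and let A be a d-by-n random matrix whose entries are independent standard Gaussian random variables, with n/d ≥ c₀ for some constant c₀ > 1. Then there exist constants c₂, c₄ > 1 and 0 < c₆ < 1, depending only on c₀, such that with probability at least 1 − 2·c₄·c₆^d one has min over subsets S ⊆ [n] with |S| = d of σ_d(A_S) ≤ 1/(c₄·c₂^{d−1}). In other words, with exponentially high probability some d-by-d submatrix of A has exponentially small smallest singular value. -/
open MeasureTheory ProbabilityTheory

/-- The smallest singular value of a `d`-by-`d` real matrix: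
the infimum of `‖M x‖₂` over unit vectors `x`. -/
noncomputable def sigmaMin {d : ℕ} (M : Matrix (Fin d) (Fin d) ℝ) : ℝ :=
  sInf { r : ℝ | ∃ x : EuclideanSpace ℝ (Fin d), ‖x‖ = 1 ∧
    r = ‖(EuclideanSpace.equiv (Fin d) ℝ).symm (M.mulVec ((EuclideanSpace.equiv (Fin d) ℝ) x))‖ }

/-!
Write `d = m + k + 1` with `k` proportional to `d`, and split `m + 3 k` of the columns into `m` base
columns, `k` pairs, and `k` further columns `b`. For each `x : {0, 1}^k` let `u x` be a unit normal
to the base columns and to the member of each pair selected by `x`.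

If `x` and `y` differ in at least `k / 8` places, then `u x` is at distance at least a constant `t`
from `± u y` outside an exponentially small event: the columns `g` selected by `y` but not by `x`
are orthogonal to `u y` and independent of `u x`, so `∑ ⟪g, u x⟫² = ∑ ⟪g, u x ∓ u y⟫²` is at least
of order `k`, while the operator norm of the paired columns is at most of order `√d`. For such a
family a second moment argument shows that a fresh Gaussian column `b` satisfies
`|⟪b, u x⟫| ≤ (3 / 4) ^ k` for some `x` with probability bounded below, since the `2 ^ k` strips are
roughly pairwise independent. So all `k` columns `b` fail only with exponentially small probability.

When `b` succeeds at `x`, the `d` columns selected by `x` together with the base and `b` are all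
nearly orthogonal to `u x`, so the submatrix they form has an exponentially small singular value.
-/

open scoped ENNReal NNReal RealInnerProductSpace

section SecondMoment

variable {Ω X : Type*} [MeasurableSpace Ω] [Fintype X] {μ : Measure Ω} [IsFiniteMeasure μ]

lemma sq_integral_le_measureReal_mul_integral_sq {f : Ω → ℝ} {U : Set Ω} (hf : MemLp f 2 μ)
    (hU : MeasurableSet U) (hfU : f.support ⊆ U) :
    (∫ ω, f ω ∂μ) ^ 2 ≤ μ.real U * ∫ ω, f ω ^ 2 ∂μ := by
  have f_int : Integrable f μ := hf.integrable one_le_two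
  have U_int : Integrable (U.indicator (1 : Ω → ℝ)) μ := (integrable_const (1 : ℝ)).indicator hU
  have expand (l : ℝ) (ω) :
      (l * f ω - U.indicator 1 ω) ^ 2 = l * l * f ω ^ 2 - 2 * l * f ω + U.indicator 1 ω := by
    by_cases hω : ω ∈ U
    · simp only [Set.indicator_of_mem hω, Pi.one_apply]
      ring
    · simp [Set.indicator_of_notMem hω, Function.notMem_support.1 (mt (@hfU ω) hω)]
  have quadratic_nonneg (l : ℝ) :
      0 ≤ (∫ ω, f ω ^ 2 ∂μ) * (l * l) + (-2 * ∫ ω, f ω ∂μ) * l + μ.real U := by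
    calc 0 ≤ ∫ ω, (l * f ω - U.indicator 1 ω) ^ 2 ∂μ := integral_nonneg fun ω => sq_nonneg _
      _ = ∫ ω, (l * l * f ω ^ 2 - 2 * l * f ω + U.indicator 1 ω) ∂μ := by simp only [expand]
      _ = l * l * ∫ ω, f ω ^ 2 ∂μ - 2 * l * ∫ ω, f ω ∂μ + μ.real U := by
        rw [integral_add (by exact (hf.integrable_sq.const_mul _).sub (f_int.const_mul _)) U_int,
          integral_sub (hf.integrable_sq.const_mul _) (f_int.const_mul _), integral_const_mul,
          integral_const_mul, integral_indicator_one hU]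
      _ = _ := by ring
  have := discrim_le_zero quadratic_nonneg
  rw [discrim] at this
  linarith

lemma chung_erdos {A : X → Set Ω} (hA : ∀ x, MeasurableSet (A x)) :
    (∑ x, μ.real (A x)) ^ 2 ≤ μ.real (⋃ x, A x) * ∑ x, ∑ y, μ.real (A x ∩ A y) := by
  have memLp_indicator {B : Set Ω} (hB : MeasurableSet B) :
      MemLp (B.indicator (1 : Ω → ℝ)) 2 μ := (memLp_const (1 : ℝ)).indicator hB
  have hAA (x y) : MeasurableSet (A x ∩ A y) := (hA x).inter (hA y)
  have sq_eq (ω) :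
      (∑ x, (A x).indicator (1 : Ω → ℝ) ω) ^ 2 = ∑ x, ∑ y, (A x ∩ A y).indicator 1 ω := by
    simp only [sq, Finset.sum_mul_sum, ← Set.inter_indicator_mul, mul_one, Pi.one_def]
  have support_subset : (fun ω => ∑ x, (A x).indicator (1 : Ω → ℝ) ω).support ⊆ ⋃ x, A x := by
    intro ω hω
    obtain ⟨x, -, hx⟩ := Finset.exists_ne_zero_of_sum_ne_zero hω
    exact Set.mem_iUnion.2 ⟨x, Set.mem_of_indicator_ne_zero hx⟩
  convert sq_integral_le_measureReal_mul_integral_sq (μ := μ)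
    (memLp_finsetSum _ fun x _ => memLp_indicator (hA x)) (.iUnion hA) support_subset
    using 2
  · rw [integral_finsetSum _ fun x _ => (memLp_indicator (hA x)).integrable one_le_two]
    simp [integral_indicator_one, hA]
  · simp only [sq_eq]
    rw [integral_finsetSum _ fun x _ => integrable_finsetSum _ fun y _ =>
      (memLp_indicator (hAA x y)).integrable one_le_two]
    refine Finset.sum_congr rfl fun x _ => ?_
    rw [integral_finsetSum _ fun y _ => (memLp_indicator (hAA x y)).integrable one_le_two]
    simp [integral_indicator_one, hAA]

end SecondMoment

section Gaussian

lemma gaussianReal_Icc_le (a b : ℝ) : gaussianReal 0 1 (Set.Icc a b) ≤ ENNReal.ofReal (b - a) := by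
  have pdf_le_one (x : ℝ) : gaussianPDFReal 0 1 x ≤ 1 := by
    have one_le_sqrt : 1 ≤ √(2 * Real.pi) := Real.one_le_sqrt.2 (by linarith [Real.pi_gt_three])
    simp only [gaussianPDFReal, NNReal.coe_one, mul_one, sub_zero]
    refine mul_le_one₀ (inv_le_one_of_one_le₀ one_le_sqrt) (Real.exp_nonneg _) ?_
    rw [Real.exp_le_one_iff]
    linarith [sq_nonneg x]
  calc gaussianReal 0 1 (Set.Icc a b) = ∫⁻ x in Set.Icc a b, gaussianPDF 0 1 x :=
        gaussianReal_apply _ one_ne_zero _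
    _ ≤ ∫⁻ _ in Set.Icc a b, 1 := lintegral_mono fun x => by simpa [gaussianPDF] using pdf_le_one x
    _ = ENNReal.ofReal (b - a) := by simp

lemma div_four_le_gaussianReal_Icc {η : ℝ} (hη : η ≤ 1) :
    η / 4 ≤ (gaussianReal 0 1).real (Set.Icc (-η) η) := by
  have le_pdf {x : ℝ} (hx : |x| ≤ 1) : 1 / 8 ≤ gaussianPDFReal 0 1 x := by
    have sqrt_le : √(2 * Real.pi) ≤ 4 :=
      Real.sqrt_le_iff.2 ⟨by norm_num, by linarith [Real.pi_lt_four]⟩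
    have le_exp : 1 / 2 ≤ Real.exp (-x ^ 2 / 2) := by
      linarith [Real.add_one_le_exp (-x ^ 2 / 2), (sq_le_one_iff_abs_le_one x).2 hx]
    simp only [gaussianPDFReal, NNReal.coe_one, mul_one, sub_zero]
    calc (1 / 8 : ℝ) = 4⁻¹ * (1 / 2) := by norm_num
      _ ≤ (√(2 * Real.pi))⁻¹ * Real.exp (-x ^ 2 / 2) := by gcongr
  rw [measureReal_def, ← ENNReal.ofReal_le_iff_le_toReal (measure_ne_top _ _),
    gaussianReal_apply _ one_ne_zero]
  calc ENNReal.ofReal (η / 4) = ∫⁻ _ in Set.Icc (-η) η, ENNReal.ofReal (1 / 8) := by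
        rw [setLIntegral_const, Real.volume_Icc, ← ENNReal.ofReal_mul (by norm_num)]
        congr 1
        ring
    _ ≤ ∫⁻ x in Set.Icc (-η) η, gaussianPDF 0 1 x :=
        setLIntegral_mono (measurable_gaussianPDF _ _) fun x hx =>
          ENNReal.ofReal_le_ofReal (le_pdf ((abs_le.2 hx).trans hη))

lemma mgf_sq_gaussianReal {t : ℝ} (ht : t < 1 / 2) :
    mgf (· ^ 2) (gaussianReal 0 1) t = √((1 - 2 * t)⁻¹) := by
  have density (x : ℝ) : gaussianPDFReal 0 1 x • Real.exp (t * x ^ 2) =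
      (√(2 * Real.pi))⁻¹ * Real.exp (-(1 / 2 - t) * x ^ 2) := by
    simp only [gaussianPDFReal, smul_eq_mul, NNReal.coe_one, mul_one, sub_zero]
    rw [mul_assoc, ← Real.exp_add]
    congr 2
    ring
  have half_sub_ne_zero : 1 / 2 - t ≠ 0 := by linarith
  have one_sub_ne_zero : 1 - 2 * t ≠ 0 := by linarith
  rw [mgf, integral_gaussianReal_eq_integral_smul one_ne_zero]
  simp only [density]
  rw [integral_const_mul, integral_gaussian, ← Real.sqrt_inv, ← Real.sqrt_mul (by positivity)]
  congr 1
  field_simp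

end Gaussian

section ChiSquare

variable {Ω ι : Type*} [MeasurableSpace Ω] [Fintype ι] {μ : Measure Ω} {X : ι → Ω → ℝ} {t : ℝ}

lemma mgf_sum_sq (hind : iIndepFun X μ)
    (hX : ∀ i, HasLaw (X i) (gaussianReal 0 1) μ) (ht : t < 1 / 2) :
    mgf (fun ω => ∑ i, X i ω ^ 2) μ t = √((1 - 2 * t)⁻¹) ^ Fintype.card ι := by
  have mgf_sq (i) : mgf (fun ω => X i ω ^ 2) μ t = √((1 - 2 * t)⁻¹) := by
    rw [← mgf_sq_gaussianReal ht, ← (hX i).map_eq, mgf_map (hX i).aemeasurable (by fun_prop)]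
    rfl
  have := (hind.comp (fun _ r => r ^ 2) fun _ => by fun_prop).mgf_sum₀ (t := t)
    (fun i => (hX i).aemeasurable.pow_const 2) Finset.univ
  simpa [Function.comp_def, Finset.sum_fn, mgf_sq] using this

lemma integrable_exp_mul_sum_sq (hind : iIndepFun X μ)
    (hX : ∀ i, HasLaw (X i) (gaussianReal 0 1) μ) (ht : t < 1 / 2) :
    Integrable (fun ω => Real.exp (t * ∑ i, X i ω ^ 2)) μ := by
  refine .of_integral_ne_zero ?_
  have : 0 < 1 - 2 * t := by linarith
  change mgf (fun ω => ∑ i, X i ω ^ 2) μ t ≠ 0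
  rw [mgf_sum_sq hind hX ht]
  positivity

lemma measureReal_le_sum_sq_le (hind : iIndepFun X μ)
    (hX : ∀ i, HasLaw (X i) (gaussianReal 0 1) μ) (α : ℝ) :
    μ.real {ω | α ≤ ∑ i, X i ω ^ 2} ≤ Real.exp (-α / 4) * √2 ^ Fintype.card ι := by
  have := hind.isProbabilityMeasure
  have ht : (1 / 4 : ℝ) < 1 / 2 := by norm_num
  refine (measure_ge_le_exp_mul_mgf α (by norm_num)
    (integrable_exp_mul_sum_sq hind hX ht)).trans_eq ?_
  rw [mgf_sum_sq hind hX ht]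
  norm_num
  ring_nf

lemma measureReal_sum_sq_le_le (hind : iIndepFun X μ)
    (hX : ∀ i, HasLaw (X i) (gaussianReal 0 1) μ) {s : ℝ} (hs : 0 < s) (hs1 : s ≤ 1) :
    μ.real {ω | ∑ i, X i ω ^ 2 ≤ s ^ 2 * Fintype.card ι} ≤ (2 * s) ^ Fintype.card ι := by
  have := hind.isProbabilityMeasure
  set t : ℝ := (1 - (s ^ 2)⁻¹) / 2 with ht_def
  have ht : t ≤ 0 := by
    linarith [(one_le_inv₀ (by positivity : 0 < s ^ 2)).2 (pow_le_one₀ hs.le hs1)]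
  have exp_le : Real.exp (-t * s ^ 2) ≤ 2 := by
    calc Real.exp (-t * s ^ 2) ≤ Real.exp (1 / 2) := by
          gcongr
          rw [ht_def]
          field_simp
          nlinarith
      _ ≤ Real.exp (Real.log 2) := by
          gcongr
          linarith [Real.log_two_gt_d9]
      _ = 2 := Real.exp_log two_pos
  calc μ.real {ω | ∑ i, X i ω ^ 2 ≤ s ^ 2 * Fintype.card ι}
      ≤ Real.exp (-t * (s ^ 2 * Fintype.card ι)) * mgf (fun ω => ∑ i, X i ω ^ 2) μ t :=
        measure_le_le_exp_mul_mgf _ ht (integrable_exp_mul_sum_sq hind hX (by linarith))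
    _ = (Real.exp (-t * s ^ 2) * s) ^ Fintype.card ι := by
        rw [mgf_sum_sq hind hX (by linarith), mul_pow, ← Real.exp_nat_mul]
        congr 2
        · ring
        · rw [ht_def, show (1 - 2 * ((1 - (s ^ 2)⁻¹) / 2))⁻¹ = s ^ 2 by field_simp; ring,
            Real.sqrt_sq hs.le]
    _ ≤ (2 * s) ^ Fintype.card ι := by gcongr

end ChiSquare

lemma measurableSet_strips (c s η : ℝ) :
    MeasurableSet {p : ℝ × ℝ | |p.1| ≤ η ∧ |c * p.1 + s * p.2| ≤ η} := by
  measurability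

lemma gaussianReal_prod_strips_le (c : ℝ) {s η : ℝ} (hs : 0 < s) :
    ((gaussianReal 0 1).prod (gaussianReal 0 1)) {p | |p.1| ≤ η ∧ |c * p.1 + s * p.2| ≤ η} ≤
      gaussianReal 0 1 (Set.Icc (-η) η) * ENNReal.ofReal (2 * η / s) := by
  have fiber_subset (x : ℝ) : Prod.mk x ⁻¹' {p : ℝ × ℝ | |p.1| ≤ η ∧ |c * p.1 + s * p.2| ≤ η} ⊆
      Set.Icc ((-η - c * x) / s) ((η - c * x) / s) := by
    rintro y ⟨-, hy⟩
    rw [abs_le] at hy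
    exact ⟨by rw [div_le_iff₀ hs]; linarith, by rw [le_div_iff₀ hs]; linarith⟩
  rw [Measure.prod_apply (measurableSet_strips c s η)]
  calc ∫⁻ x, gaussianReal 0 1 (Prod.mk x ⁻¹' {p | |p.1| ≤ η ∧ |c * p.1 + s * p.2| ≤ η})
        ∂(gaussianReal 0 1)
      ≤ ∫⁻ x, (Set.Icc (-η) η).indicator (fun _ => ENNReal.ofReal (2 * η / s)) x
          ∂(gaussianReal 0 1) := by
        refine lintegral_mono fun x => ?_
        by_cases hx : x ∈ Set.Icc (-η) η
        · rw [Set.indicator_of_mem hx]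
          refine ((measure_mono (fiber_subset x)).trans (gaussianReal_Icc_le _ _)).trans_eq ?_
          congr 1
          ring
        · have : Prod.mk x ⁻¹' {p : ℝ × ℝ | |p.1| ≤ η ∧ |c * p.1 + s * p.2| ≤ η} = ∅ :=
            Set.eq_empty_of_forall_notMem fun y hy => hx (abs_le.1 hy.1)
          simp [this]
    _ = gaussianReal 0 1 (Set.Icc (-η) η) * ENNReal.ofReal (2 * η / s) := by
        rw [lintegral_indicator_const measurableSet_Icc, mul_comm]

section UnitVectors

variable {E : Type*} [NormedAddCommGroup E] [InnerProductSpace ℝ E] {u v : E}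

lemma exists_unit_orthogonal_decomposition (hu : ‖u‖ = 1) (hv : ‖v‖ = 1) (huv : ⟪u, v⟫ ^ 2 < 1) :
    ∃ w, ‖w‖ = 1 ∧ ⟪u, w⟫ = 0 ∧ v = ⟪u, v⟫ • u + √(1 - ⟪u, v⟫ ^ 2) • w := by
  set c := ⟪u, v⟫
  have norm_sq_eq : ‖v - c • u‖ ^ 2 = 1 - c ^ 2 := by
    rw [norm_sub_sq_real, inner_smul_right, norm_smul, hu, hv, real_inner_comm, mul_one,
      Real.norm_eq_abs, sq_abs]
    ring
  have norm_eq : ‖v - c • u‖ = √(1 - c ^ 2) := by rw [← norm_sq_eq, Real.sqrt_sq (norm_nonneg _)]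
  have sqrt_pos : 0 < √(1 - c ^ 2) := Real.sqrt_pos.2 (by linarith)
  refine ⟨(√(1 - c ^ 2))⁻¹ • (v - c • u), ?_, ?_, ?_⟩
  · rw [norm_smul, norm_eq, norm_inv, Real.norm_of_nonneg sqrt_pos.le, inv_mul_cancel₀ sqrt_pos.ne']
  · rw [inner_smul_right, inner_sub_right, inner_smul_right, real_inner_self_eq_norm_sq, hu]
    ring
  · rw [smul_inv_smul₀ sqrt_pos.ne', add_sub_cancel]

lemma half_le_sqrt_one_sub_inner_sq {t : ℝ} (hu : ‖u‖ = 1) (hv : ‖v‖ = 1) (ht : 0 ≤ t)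
    (hsub : t ≤ ‖u - v‖) (hadd : t ≤ ‖u + v‖) : t / 2 ≤ √(1 - ⟪u, v⟫ ^ 2) := by
  have hsub_sq : t ^ 2 ≤ 2 - 2 * ⟪u, v⟫ := by
    linarith [pow_le_pow_left₀ ht hsub 2, norm_sub_sq_real u v, congr($hu ^ 2), congr($hv ^ 2)]
  have hadd_sq : t ^ 2 ≤ 2 + 2 * ⟪u, v⟫ := by
    linarith [pow_le_pow_left₀ ht hadd 2, norm_add_sq_real u v, congr($hu ^ 2), congr($hv ^ 2)]
  refine Real.le_sqrt_of_sq_le ?_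
  rcases le_total 0 ⟪u, v⟫ with h | h <;> nlinarith

end UnitVectors

section StdGaussian

variable {E : Type*} [NormedAddCommGroup E] [InnerProductSpace ℝ E] [FiniteDimensional ℝ E]
  [MeasurableSpace E] [BorelSpace E]

lemma hasLaw_inner_stdGaussian {u : E} (hu : ‖u‖ = 1) :
    HasLaw (fun b => ⟪b, u⟫) (gaussianReal 0 1) (stdGaussian E) where
  aemeasurable := by fun_prop
  map_eq := by
    have h := IsGaussian.map_eq_gaussianReal (μ := stdGaussian E) (innerSL ℝ u)
    rw [integral_strongDual_stdGaussian, variance_dual_stdGaussian, innerSL_apply_norm, hu] at h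
    simpa [real_inner_comm] using h

lemma indepFun_inner_stdGaussian {u w : E} (h : ⟪u, w⟫ = 0) :
    IndepFun (fun b => ⟪b, u⟫) (fun b => ⟪b, w⟫) (stdGaussian E) := by
  have gaussian : HasGaussianLaw (fun b : E => (⟪u, b⟫, ⟪w, b⟫)) (stdGaussian E) :=
    (IsGaussian.hasGaussianLaw_id (μ := stdGaussian E)).map_fun ((innerSL ℝ u).prod (innerSL ℝ w))
  simp only [real_inner_comm u, real_inner_comm w] at gaussian ⊢
  refine gaussian.indepFun_of_covariance_eq_zero ?_
  rw [← covarianceBilin_apply_eq_cov IsGaussian.memLp_two_id, covarianceBilin_stdGaussian]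
  exact h

lemma hasLaw_inner_prod_stdGaussian {u w : E} (hu : ‖u‖ = 1) (hw : ‖w‖ = 1) (h : ⟪u, w⟫ = 0) :
    HasLaw (fun b => (⟪b, u⟫, ⟪b, w⟫)) ((gaussianReal 0 1).prod (gaussianReal 0 1))
      (stdGaussian E) :=
  (indepFun_iff_hasLaw_prodMk_prod (hasLaw_inner_stdGaussian hu) (hasLaw_inner_stdGaussian hw)).1
    (indepFun_inner_stdGaussian h)

lemma stdGaussian_real_abs_inner_le {u : E} (hu : ‖u‖ = 1) (η : ℝ) :
    (stdGaussian E).real {b | |⟪b, u⟫| ≤ η} = (gaussianReal 0 1).real (Set.Icc (-η) η) := by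
  simp only [abs_le]
  exact (hasLaw_inner_stdGaussian hu).measureReal_eq measurableSet_Icc

lemma stdGaussian_real_abs_inner_le_and_le {u v : E} {t η : ℝ} (hu : ‖u‖ = 1) (hv : ‖v‖ = 1)
    (ht : 0 < t) (hη : 0 ≤ η) (hsub : t ≤ ‖u - v‖) (hadd : t ≤ ‖u + v‖) :
    (stdGaussian E).real {b | |⟪b, u⟫| ≤ η ∧ |⟪b, v⟫| ≤ η} ≤
      (gaussianReal 0 1).real (Set.Icc (-η) η) * (4 * η / t) := by
  set c := ⟪u, v⟫
  set s := √(1 - c ^ 2)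
  have half_le : t / 2 ≤ s := half_le_sqrt_one_sub_inner_sq hu hv ht.le hsub hadd
  have s_pos : 0 < s := by linarith
  obtain ⟨w, hw, huw, v_eq⟩ :=
    exists_unit_orthogonal_decomposition hu hv (by linarith [Real.sqrt_pos.1 s_pos])
  have width_le : 2 * η / s ≤ 4 * η / t := by
    rw [div_le_div_iff₀ s_pos ht]
    nlinarith
  have inner_v (b) : ⟪b, v⟫ = c * ⟪b, u⟫ + s * ⟪b, w⟫ := by
    rw [v_eq, inner_add_right, inner_smul_right, inner_smul_right]
  simp only [inner_v]
  rw [(hasLaw_inner_prod_stdGaussian hu hw huw).measureReal_eq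
    (p := fun p : ℝ × ℝ => |p.1| ≤ η ∧ |c * p.1 + s * p.2| ≤ η)
    (measurableSet_strips c s η)]
  refine (ENNReal.toReal_mono (by finiteness) (gaussianReal_prod_strips_le c s_pos)).trans ?_
  rw [ENNReal.toReal_mul, ENNReal.toReal_ofReal (by positivity), ← measureReal_def]
  gcongr

end StdGaussian

section SmallBall

variable {E X : Type*} [NormedAddCommGroup E] [InnerProductSpace ℝ E] [FiniteDimensional ℝ E]
  [MeasurableSpace E] [BorelSpace E] [Fintype X] {u : X → E} {t η : ℝ}

lemma sum_stdGaussian_real_abs_inner_le_and_le (hu : ∀ x, ‖u x‖ = 1) (ht : 0 < t) (hη : 0 ≤ η)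
    (x : X) :
    ∑ y, (stdGaussian E).real {b | |⟪b, u x⟫| ≤ η ∧ |⟪b, u y⟫| ≤ η} ≤
      ({y | ‖u x - u y‖ < t ∨ ‖u x + u y‖ < t} : Finset X).card *
        (gaussianReal 0 1).real (Set.Icc (-η) η) +
      Fintype.card X * ((gaussianReal 0 1).real (Set.Icc (-η) η) * (4 * η / t)) := by
  set q := (gaussianReal 0 1).real (Set.Icc (-η) η)
  have pair_le (y) : (stdGaussian E).real {b | |⟪b, u x⟫| ≤ η ∧ |⟪b, u y⟫| ≤ η} ≤
      (if ‖u x - u y‖ < t ∨ ‖u x + u y‖ < t then q else 0) + q * (4 * η / t) := by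
    split_ifs with hxy
    · refine le_add_of_le_of_nonneg ?_ (by positivity)
      refine le_of_le_of_eq ?_ (stdGaussian_real_abs_inner_le (hu x) η)
      exact measureReal_mono fun b hb => hb.1
    · push Not at hxy
      rw [zero_add]
      exact stdGaussian_real_abs_inner_le_and_le (hu x) (hu y) ht hη hxy.1 hxy.2
  refine (Finset.sum_le_sum fun y _ => pair_le y).trans_eq ?_
  rw [Finset.sum_add_distrib, ← Finset.sum_filter, Finset.sum_const, Finset.sum_const,
    nsmul_eq_mul, nsmul_eq_mul, Finset.card_univ]

lemma inv_le_stdGaussian_real_exists_abs_inner_le [Nonempty X] (hu : ∀ x, ‖u x‖ = 1) (ht : 0 < t)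
    (hη : 0 < η) (hη1 : η ≤ 1)
    (hnear : ∀ x, (({y | ‖u x - u y‖ < t ∨ ‖u x + u y‖ < t} : Finset X).card : ℝ) ≤
      Fintype.card X * η) :
    (4 + 16 / t)⁻¹ ≤ (stdGaussian E).real {b | ∃ x, |⟪b, u x⟫| ≤ η} := by
  set q := (gaussianReal 0 1).real (Set.Icc (-η) η)
  set N := (Fintype.card X : ℝ)
  set p := (stdGaussian E).real {b | ∃ x, |⟪b, u x⟫| ≤ η}
  have hq : η ≤ 4 * q := by linarith [div_four_le_gaussianReal_Icc hη1]
  have q_pos : 0 < q := by linarith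
  have N_pos : 0 < N := Nat.cast_pos.2 Fintype.card_pos
  have second_moment : (N * q) ^ 2 ≤ p * (N * (N * η * q + N * (q * (4 * η / t)))) := by
    have h := chung_erdos (μ := stdGaussian E) (A := fun x => {b : E | |⟪b, u x⟫| ≤ η})
      fun x => measurableSet_le (by fun_prop) (by fun_prop)
    have inter (x y) : {b : E | |⟪b, u x⟫| ≤ η} ∩ {b | |⟪b, u y⟫| ≤ η} =
      {b | |⟪b, u x⟫| ≤ η ∧ |⟪b, u y⟫| ≤ η} := rfl
    have union : ⋃ x, {b : E | |⟪b, u x⟫| ≤ η} = {b | ∃ x, |⟪b, u x⟫| ≤ η} := by ext; simp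
    simp only [inter, union, stdGaussian_real_abs_inner_le (hu _), Finset.sum_const,
      Finset.card_univ, nsmul_eq_mul] at h
    refine h.trans (mul_le_mul_of_nonneg_left ?_ measureReal_nonneg)
    refine (Finset.sum_le_card_nsmul _ _ _ fun x _ => ?_).trans_eq (nsmul_eq_mul _ _)
    exact (sum_stdGaussian_real_abs_inner_le_and_le hu ht hη.le x).trans
      (by gcongr; exact hnear x)
  have q_le_mul : q ≤ p * (4 + 16 / t) * q := by
    have : q ≤ p * (1 + 4 / t) * η := by
      refine le_of_mul_le_mul_left (second_moment.trans_eq' ?_ |>.trans_eq ?_)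
        (by positivity : 0 < N ^ 2 * q) <;> ring
    calc q ≤ p * (1 + 4 / t) * η := this
      _ ≤ p * (1 + 4 / t) * (4 * q) := by gcongr
      _ = p * (4 + 16 / t) * q := by ring
  rw [inv_le_iff_one_le_mul₀ (by positivity)]
  exact le_of_mul_le_mul_right (by rwa [one_mul]) q_pos

end SmallBall

section Hamming

variable {κ : Type*} [Fintype κ]

lemma sum_pow_hammingDist [DecidableEq κ] {R : Type*} [CommSemiring R] (z : R) (x : κ → Bool) :
    ∑ y, z ^ hammingDist x y = (1 + z) ^ Fintype.card κ := by
  have pow_eq (y : κ → Bool) : z ^ hammingDist x y = ∏ i, if x i ≠ y i then z else 1 := by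
    rw [hammingDist, Finset.prod_ite]
    simp
  simp only [pow_eq]
  rw [← Fintype.prod_sum fun i b => if x i ≠ b then z else 1, ← Finset.card_univ,
    ← Finset.prod_const]
  refine Finset.prod_congr rfl fun i _ => ?_
  cases x i <;> simp [add_comm]

lemma card_hammingDist_lt_mul_pow_le [DecidableEq κ] {r : ℝ} (hr : 0 ≤ r) (hr1 : r ≤ 1) (L : ℕ)
    (x : κ → Bool) :
    (({y | L * hammingDist x y < Fintype.card κ} : Finset (κ → Bool)).card : ℝ) *
      r ^ Fintype.card κ ≤ (1 + r ^ L) ^ Fintype.card κ := by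
  rw [← sum_pow_hammingDist (r ^ L) x, ← nsmul_eq_mul, ← Finset.sum_const]
  calc ∑ y : κ → Bool with L * hammingDist x y < Fintype.card κ, r ^ Fintype.card κ
      ≤ ∑ y : κ → Bool with L * hammingDist x y < Fintype.card κ, (r ^ L) ^ hammingDist x y := by
        refine Finset.sum_le_sum fun y hy => ?_
        rw [← pow_mul]
        exact pow_le_pow_of_le_one hr hr1 (Finset.mem_filter.1 hy).2.le
    _ ≤ ∑ y, (r ^ L) ^ hammingDist x y :=
        Finset.sum_le_sum_of_subset_of_nonneg (Finset.filter_subset _ _) fun _ _ _ => by positivity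

/-- `u` separates (up to sign) any two sign patterns that differ in at least one eighth of the
coordinates. -/
def HammingSeparated {E : Type*} [NormedAddCommGroup E] (t : ℝ) (u : (κ → Bool) → E) : Prop :=
  ∀ x y, Fintype.card κ ≤ 8 * hammingDist x y → t ≤ ‖u x - u y‖ ∧ t ≤ ‖u x + u y‖

variable {E : Type*} [NormedAddCommGroup E] [InnerProductSpace ℝ E] [FiniteDimensional ℝ E]
  [MeasurableSpace E] [BorelSpace E]

lemma HammingSeparated.inv_le_stdGaussian_real {t : ℝ} {u : (κ → Bool) → E}
    (h : HammingSeparated t u) (ht : 0 < t) (hu : ∀ x, ‖u x‖ = 1) :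
    (4 + 16 / t)⁻¹ ≤ (stdGaussian E).real {b | ∃ x, |⟪b, u x⟫| ≤ (3 / 4) ^ Fintype.card κ} := by
  classical
  refine inv_le_stdGaussian_real_exists_abs_inner_le hu ht (by positivity)
    (pow_le_one₀ (by norm_num) (by norm_num)) fun x => ?_
  have near_subset : ({y | ‖u x - u y‖ < t ∨ ‖u x + u y‖ < t} : Finset (κ → Bool)) ⊆
      ({y | 8 * hammingDist x y < Fintype.card κ} : Finset (κ → Bool)) := by
    intro y
    simp only [Finset.mem_filter, Finset.mem_univ, true_and]
    contrapose!
    exact h x y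
  have count : (({y | 8 * hammingDist x y < Fintype.card κ} : Finset (κ → Bool)).card : ℝ) ≤
      (3 / 2) ^ Fintype.card κ := by
    refine le_of_mul_le_mul_right ((card_hammingDist_lt_mul_pow_le (r := 3 / 4) (by norm_num)
      (by norm_num) 8 x).trans ?_) (by positivity : (0 : ℝ) < (3 / 4) ^ Fintype.card κ)
    rw [← mul_pow]
    gcongr
    norm_num
  calc (({y | ‖u x - u y‖ < t ∨ ‖u x + u y‖ < t} : Finset (κ → Bool)).card : ℝ)
      ≤ ({y | 8 * hammingDist x y < Fintype.card κ} : Finset (κ → Bool)).card := by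
        exact_mod_cast Finset.card_le_card near_subset
    _ ≤ (3 / 2) ^ Fintype.card κ := count
    _ = Fintype.card (κ → Bool) * (3 / 4) ^ Fintype.card κ := by
        rw [Fintype.card_fun, Fintype.card_bool, Nat.cast_pow, ← mul_pow]
        norm_num

end Hamming

section Net

variable {E : Type*} [NormedAddCommGroup E] [NormedSpace ℝ E]

lemma packingNumber_half_sphere_le [FiniteDimensional ℝ E] :
    Metric.packingNumber (1 / 2) (Metric.sphere (0 : E) 1) ≤ 5 ^ Module.finrank ℝ E := by
  classical
  refine iSup₂_le fun C hC => iSup_le fun hsep => ?_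
  by_contra! hlt
  obtain ⟨D, hDC, hD⟩ := Set.exists_subset_encard_eq (Order.add_one_le_of_lt hlt)
  have D_finite : D.Finite := Set.encard_ne_top_iff.1 (hD ▸ by simp)
  lift D to Finset E using D_finite
  have two_smul_injective : Function.Injective (fun x : E => (2 : ℝ) • x) :=
    smul_right_injective E two_ne_zero
  have card_le := Besicovitch.card_le_of_separated (D.image fun x => (2 : ℝ) • x)
    (by
      simp only [Finset.forall_mem_image]
      intro x hx
      simp [norm_smul, mem_sphere_zero_iff_norm.1 (hC (hDC hx))])
    (by
      simp only [Finset.forall_mem_image]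
      intro x hx y hy hxy
      have dist_gt : 1 / 2 < ‖x - y‖ := by
        have : ((1 / 2 : ℝ≥0) : ℝ≥0∞) < edist x y :=
          hsep (hDC hx) (hDC hy) (by rintro rfl; exact hxy rfl)
        rw [edist_dist, ENNReal.lt_ofReal_iff_toReal_lt (by simp), dist_eq_norm] at this
        simpa using this
      rw [← smul_sub, norm_smul, Real.norm_two]
      linarith)
  rw [Finset.card_image_of_injective _ two_smul_injective] at card_le
  rw [Set.encard_coe_eq_coe_finsetCard] at hD
  have : D.card = 5 ^ Module.finrank ℝ E + 1 := by exact_mod_cast hD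
  omega

lemma exists_finset_isCover_half_sphere [FiniteDimensional ℝ E] :
    ∃ N : Finset E, N.card ≤ 5 ^ Module.finrank ℝ E ∧ (∀ y ∈ N, ‖y‖ = 1) ∧
      Metric.IsCover (1 / 2) (Metric.sphere (0 : E) 1) N := by
  have packing_ne_top : Metric.packingNumber (1 / 2) (Metric.sphere (0 : E) 1) ≠ ⊤ :=
    ne_top_of_le_ne_top (by simp) packingNumber_half_sphere_le
  have encard_le := (Metric.encard_maximalSeparatedSet packing_ne_top).trans_le
    packingNumber_half_sphere_le
  have finite := Set.encard_ne_top_iff.1 (ne_top_of_le_ne_top (by simp) encard_le)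
  refine ⟨finite.toFinset, ?_, fun y hy => ?_, ?_⟩
  · rw [finite.encard_eq_coe_toFinset_card] at encard_le
    exact_mod_cast encard_le
  · exact mem_sphere_zero_iff_norm.1
      (Metric.maximalSeparatedSet_subset (finite.mem_toFinset.1 hy))
  · rw [finite.coe_toFinset]
    exact Metric.isCover_maximalSeparatedSet packing_ne_top

lemma opNorm_le_two_mul_of_isCover {F : Type*} [NormedAddCommGroup F] [NormedSpace ℝ F]
    {L : E →L[ℝ] F} {N : Set E} {a : ℝ} (ha : 0 ≤ a)
    (hN : Metric.IsCover (1 / 2) (Metric.sphere (0 : E) 1) N) (h : ∀ y ∈ N, ‖L y‖ ≤ a) :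
    ‖L‖ ≤ 2 * a := by
  suffices ‖L‖ ≤ a + ‖L‖ / 2 by linarith
  refine L.opNorm_le_of_unit_norm (by positivity) fun v hv => ?_
  obtain ⟨y, hy, hvy⟩ := hN (mem_sphere_zero_iff_norm.2 hv)
  have norm_sub_le : ‖v - y‖ ≤ 1 / 2 := by
    rw [← dist_eq_norm]
    change edist v y ≤ _ at hvy
    rw [edist_le_coe] at hvy
    simpa using NNReal.coe_le_coe.2 hvy
  calc ‖L v‖ = ‖L y + L (v - y)‖ := by rw [← map_add, add_sub_cancel]
    _ ≤ ‖L y‖ + ‖L (v - y)‖ := norm_add_le _ _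
    _ ≤ a + ‖L‖ * (1 / 2) := by
        gcongr
        · exact h y hy
        · exact L.le_opNorm_of_le norm_sub_le
    _ = a + ‖L‖ / 2 := by ring

end Net

section AnalysisOperator

variable {E ι : Type*} [NormedAddCommGroup E] [InnerProductSpace ℝ E] [Fintype ι]

/-- The analysis operator `v ↦ (⟪z i, v⟫)ᵢ` of the finite family `z`, i.e. the matrix with
rows `z i`. -/
noncomputable def analysisOperator (z : ι → E) : E →L[ℝ] EuclideanSpace ℝ ι :=
  (EuclideanSpace.equiv ι ℝ).symm.toContinuousLinearMap ∘L
    ContinuousLinearMap.pi fun i => innerSL ℝ (z i)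

lemma norm_analysisOperator_apply_sq (z : ι → E) (v : E) :
    ‖analysisOperator z v‖ ^ 2 = ∑ i, ⟪z i, v⟫ ^ 2 := by
  rw [EuclideanSpace.real_norm_sq_eq]
  rfl

variable [FiniteDimensional ℝ E]

lemma continuous_norm_analysisOperator : Continuous fun z : ι → E => ‖analysisOperator z‖ :=
  (continuous_clm_apply.2 fun _ => (EuclideanSpace.equiv ι ℝ).symm.continuous.comp
    (continuous_pi fun i => (continuous_apply i).inner continuous_const)).norm

variable [MeasurableSpace E] [BorelSpace E]

lemma iIndepFun_inner_pi_stdGaussian (u : E) :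
    iIndepFun (fun i (z : ι → E) => ⟪z i, u⟫) (Measure.pi fun _ => stdGaussian E) :=
  iIndepFun_pi (X := fun _ b => ⟪b, u⟫) fun _ => by fun_prop

lemma hasLaw_inner_pi_stdGaussian {u : E} (hu : ‖u‖ = 1) (i : ι) :
    HasLaw (fun z : ι → E => ⟪z i, u⟫) (gaussianReal 0 1) (Measure.pi fun _ => stdGaussian E) :=
  (hasLaw_inner_stdGaussian hu).comp
    (measurePreserving_eval (fun _ : ι => stdGaussian E) i).hasLaw

lemma measureReal_lt_norm_analysisOperator_le {r : ℝ} (hr : 0 ≤ r) :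
    (Measure.pi fun _ : ι => stdGaussian E).real {z | r < ‖analysisOperator z‖} ≤
      5 ^ Module.finrank ℝ E * (Real.exp (-r ^ 2 / 16) * √2 ^ Fintype.card ι) := by
  obtain ⟨N, N_card, N_unit, N_cover⟩ := exists_finset_isCover_half_sphere (E := E)
  have subset_iUnion : {z : ι → E | r < ‖analysisOperator z‖} ⊆
      ⋃ y ∈ N, {z | r ^ 2 / 4 ≤ ∑ i, ⟪z i, y⟫ ^ 2} := by
    intro z hz
    contrapose! hz
    simp only [Set.mem_iUnion, not_exists, Set.mem_ofPred_eq, not_le] at hz ⊢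
    suffices ‖analysisOperator z‖ ≤ 2 * (r / 2) by linarith
    refine opNorm_le_two_mul_of_isCover (by positivity) N_cover fun y hy => ?_
    refine le_of_sq_le_sq ?_ (by positivity)
    rw [norm_analysisOperator_apply_sq]
    linarith [hz y hy]
  calc (Measure.pi fun _ : ι => stdGaussian E).real {z | r < ‖analysisOperator z‖}
      ≤ ∑ y ∈ N, (Measure.pi fun _ : ι => stdGaussian E).real
          {z | r ^ 2 / 4 ≤ ∑ i, ⟪z i, y⟫ ^ 2} :=
        (measureReal_mono subset_iUnion (measure_ne_top _ _)).trans
          (measureReal_biUnion_finset_le _ _)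
    _ ≤ ∑ _y ∈ N, Real.exp (-r ^ 2 / 16) * √2 ^ Fintype.card ι := by
        refine Finset.sum_le_sum fun y hy => ?_
        refine (measureReal_le_sum_sq_le (iIndepFun_inner_pi_stdGaussian y)
          (hasLaw_inner_pi_stdGaussian (N_unit y hy)) _).trans_eq ?_
        ring_nf
    _ ≤ 5 ^ Module.finrank ℝ E * (Real.exp (-r ^ 2 / 16) * √2 ^ Fintype.card ι) := by
        rw [Finset.sum_const, nsmul_eq_mul]
        gcongr
        exact_mod_cast N_card

end AnalysisOperator

section UnitNormal

variable {E ι : Type*} [NormedAddCommGroup E] [InnerProductSpace ℝ E]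

open InnerProductSpace in
lemma mem_span_of_gramSchmidt_eq_zero [LinearOrder ι] [LocallyFiniteOrderBot ι] [WellFoundedLT ι]
    {f : ι → E} {n : ι} (h : gramSchmidt ℝ f n = 0) :
    f n ∈ Submodule.span ℝ (f '' Set.Iio n) := by
  rw [gramSchmidt_def, sub_eq_zero] at h
  rw [h, ← span_gramSchmidt_Iio]
  refine Submodule.sum_mem _ fun i hi => ?_
  rw [Submodule.starProjection_singleton]
  exact Submodule.smul_mem _ _
    (Submodule.subset_span (Set.mem_image_of_mem _ (Finset.mem_Iio.1 hi)))

variable [FiniteDimensional ℝ E] [MeasurableSpace E] [BorelSpace E]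

open InnerProductSpace in
lemma measurable_gramSchmidt [LinearOrder ι] [LocallyFiniteOrderBot ι] [WellFoundedLT ι] (n : ι) :
    Measurable fun f : ι → E => gramSchmidt ℝ f n := by
  induction n using WellFoundedLT.induction with
  | ind n ih =>
    simp_rw +singlePass [gramSchmidt_def, Submodule.starProjection_singleton]
    refine (measurable_pi_apply n).sub (Finset.measurable_fun_sum _ fun i hi => ?_)
    have ih := ih i (Finset.mem_Iio.1 hi)
    exact ((ih.inner (measurable_pi_apply n)).div
      (RCLike.measurable_ofReal.comp (ih.norm.pow_const 2))).smul ih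

open InnerProductSpace in
lemma exists_measurable_ne_zero_orthogonal_fin {m : ℕ} (hm : m < Module.finrank ℝ E) :
    ∃ w : (Fin m → E) → E, Measurable w ∧ ∀ T, w T ≠ 0 ∧ ∀ j, ⟪T j, w T⟫ = 0 := by
  classical
  let w (n : ℕ) (T : Fin m → E) : E :=
    gramSchmidt ℝ (Fin.snoc T (TopologicalSpace.denseSeq E n) : Fin (m + 1) → E) (Fin.last m)
  have w_measurable (n : ℕ) : Measurable (w n) := by
    refine (measurable_gramSchmidt (Fin.last m)).comp (measurable_pi_lambda _ fun i => ?_)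
    cases i using Fin.lastCases with
    | last => simp
    | cast j => simpa using measurable_pi_apply j
  have w_orthogonal (n : ℕ) (T : Fin m → E) (j : Fin m) : ⟪T j, w n T⟫ = 0 := by
    have := gramSchmidt_inv_triangular ℝ
      (Fin.snoc T (TopologicalSpace.denseSeq E n) : Fin (m + 1) → E) (Fin.castSucc_lt_last j)
    rwa [Fin.snoc_castSucc, real_inner_comm] at this
  have exists_ne_zero (T : Fin m → E) : ∃ n, w n T ≠ 0 := by
    by_contra! w_eq_zero
    have denseSeq_mem (n : ℕ) :
        TopologicalSpace.denseSeq E n ∈ Submodule.span ℝ (Set.range T) := by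
      have := mem_span_of_gramSchmidt_eq_zero (w_eq_zero n)
      rw [Fin.snoc_last] at this
      refine Submodule.span_mono ?_ this
      rintro _ ⟨i, hi, rfl⟩
      exact ⟨i.castPred hi.ne, by
        rw [← Fin.snoc_castSucc (α := fun _ => E) _ T, Fin.castSucc_castPred]⟩
    have span_eq_top : Submodule.span ℝ (Set.range T) = ⊤ := by
      refine (Submodule.closed_of_finiteDimensional _).submodule_topologicalClosure_eq.symm.trans
        (Submodule.dense_iff_topologicalClosure_eq_top.1 ?_)
      exact (TopologicalSpace.denseRange_denseSeq E).mono (Set.range_subset_iff.2 denseSeq_mem)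
    have := finrank_range_le_card (R := ℝ) T
    rw [Set.finrank, span_eq_top, finrank_top, Fintype.card_fin] at this
    omega
  refine ⟨fun T => w (Nat.find (exists_ne_zero T)) T,
    Measurable.find w_measurable (fun n => ?_) exists_ne_zero,
    fun T => ⟨Nat.find_spec (exists_ne_zero T), w_orthogonal _ T⟩⟩
  exact (w_measurable n (measurableSet_singleton 0)).compl

lemma exists_measurable_unit_orthogonal [Fintype ι] (hι : Fintype.card ι < Module.finrank ℝ E) :
    ∃ u : (ι → E) → E, Measurable u ∧ ∀ T, ‖u T‖ = 1 ∧ ∀ i, ⟪T i, u T⟫ = 0 := by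
  obtain ⟨w, w_measurable, hw⟩ := exists_measurable_ne_zero_orthogonal_fin hι
  let e := Fintype.equivFin ι
  have w_comp_measurable : Measurable fun T : ι → E => w (T ∘ e.symm) :=
    w_measurable.comp (measurable_pi_lambda _ fun j => measurable_pi_apply (e.symm j))
  refine ⟨fun T => ‖w (T ∘ e.symm)‖⁻¹ • w (T ∘ e.symm), by fun_prop,
    fun T => ⟨norm_smul_inv_norm (hw _).1, fun i => ?_⟩⟩
  have inner_eq_zero := (hw (T ∘ e.symm)).2 (e i)
  rw [Function.comp_apply, e.symm_apply_apply] at inner_eq_zero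
  rw [inner_smul_right, inner_eq_zero, mul_zero]

end UnitNormal

section ProductLaws

variable {E ι κ J : Type*} [MeasurableSpace E] [Fintype κ] [Fintype J]

lemma hasLaw_pi_comp [Fintype ι] (P : Measure E) [IsProbabilityMeasure P] {f : ι → J}
    (hf : f.Injective) :
    HasLaw (fun ω : J → E => ω ∘ f) (Measure.pi fun _ => P) (Measure.pi fun _ => P) := by
  have indep : iIndepFun (fun i (ω : J → E) => ω (f i)) (Measure.pi fun _ => P) :=
    (iIndepFun_pi (X := fun _ : J => id) fun _ => aemeasurable_id).precomp hf
  exact indep.hasLaw_pi fun i => (measurePreserving_eval (fun _ : J => P) (f i)).hasLaw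

lemma hasLaw_pi_prodMk_comp [Fintype ι] (P : Measure E) [IsProbabilityMeasure P] {f : ι → J}
    {g : κ → J} (hfg : (Sum.elim f g).Injective) :
    HasLaw (fun ω : J → E => (ω ∘ f, ω ∘ g))
      ((Measure.pi fun _ => P).prod (Measure.pi fun _ => P)) (Measure.pi fun _ => P) :=
  (measurePreserving_sumPiEquivProdPi fun _ : ι ⊕ κ => P).comp_hasLaw (hasLaw_pi_comp P hfg)

lemma measureReal_prod_le_of_forall {α β : Type*} [MeasurableSpace α] [MeasurableSpace β]
    {μ : Measure α} {ν : Measure β} [IsProbabilityMeasure μ] [IsProbabilityMeasure ν]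
    {S : Set (α × β)} (hS : MeasurableSet S) {c : ℝ} (h : ∀ a, ν.real {b | (a, b) ∈ S} ≤ c) :
    (μ.prod ν).real S ≤ c := by
  have hc : 0 ≤ c := measureReal_nonneg.trans (h μ.nonempty_of_neZero.some)
  refine ENNReal.toReal_le_of_le_ofReal hc ?_
  calc (μ.prod ν) S ≤ ∫⁻ a, ν (Prod.mk a ⁻¹' S) ∂μ := Measure.prod_apply_le hS
    _ ≤ ∫⁻ _, ENNReal.ofReal c ∂μ :=
      lintegral_mono fun a => (ENNReal.le_ofReal_iff_toReal_le (by finiteness) hc).2 (h a)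
    _ = ENNReal.ofReal c := by simp

lemma measureReal_pi_comp_le_of_forall [Finite ι] {P : Measure E} [IsProbabilityMeasure P]
    {f : ι → J} {g : κ → J} (hfg : (Sum.elim f g).Injective) {p : (ι → E) → (κ → E) → Prop}
    (hp : MeasurableSet {q : (ι → E) × (κ → E) | p q.1 q.2}) {c : ℝ}
    (h : ∀ T, (Measure.pi fun _ => P).real {z | p T z} ≤ c) :
    (Measure.pi fun _ : J => P).real {ω | p (ω ∘ f) (ω ∘ g)} ≤ c :=
  have := Fintype.ofFinite ι
  ((hasLaw_pi_prodMk_comp P hfg).measureReal_eq hp).trans_le (measureReal_prod_le_of_forall hp h)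

end ProductLaws

section Separation

variable {E ι κ : Type*} [NormedAddCommGroup E] [InnerProductSpace ℝ E]

lemma le_norm_of_inner_eq [Fintype ι] {z : ι → E} {α : Type*} [Fintype α] {f : α → ι}
    (hf : f.Injective) {v w : E} (hvw : ∀ i, ⟪z (f i), v⟫ = ⟪z (f i), w⟫) {r t : ℝ} (hr : 0 < r)
    (hz : ‖analysisOperator z‖ ≤ r) (ht : (r * t) ^ 2 ≤ ∑ i, ⟪z (f i), w⟫ ^ 2) : t ≤ ‖v‖ := by
  have : (r * t) ^ 2 ≤ (r * ‖v‖) ^ 2 := calc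
    (r * t) ^ 2 ≤ ∑ i, ⟪z (f i), w⟫ ^ 2 := ht
    _ = ∑ i, ⟪z (f i), v⟫ ^ 2 := by simp only [hvw]
    _ = ∑ j ∈ Finset.univ.map ⟨f, hf⟩, ⟪z j, v⟫ ^ 2 := by simp
    _ ≤ ∑ j, ⟪z j, v⟫ ^ 2 := Finset.sum_le_univ_sum_of_nonneg fun _ => sq_nonneg _
    _ = ‖analysisOperator z v‖ ^ 2 := (norm_analysisOperator_apply_sq z v).symm
    _ ≤ (r * ‖v‖) ^ 2 := by
      gcongr
      exact (analysisOperator z).le_of_opNorm_le hz v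
  exact le_of_mul_le_mul_left (le_of_sq_le_sq this (by positivity)) hr

/-- The index set `ι ⊕ κ × Bool` stands for base vectors indexed by `ι` and pairs of vectors
indexed by `κ`; `select x` keeps the base and the member `x i` of the `i`-th pair. -/
def select (x : κ → Bool) : ι ⊕ κ → ι ⊕ κ × Bool :=
  Sum.map id fun i => (i, x i)

lemma select_injective (x : κ → Bool) : (select x : ι ⊕ κ → ι ⊕ κ × Bool).Injective :=
  Function.injective_id.sumMap fun _ _ h => (Prod.mk.inj h).1

lemma elim_select_injective (x y : κ → Bool) :
    (Sum.elim (select x : ι ⊕ κ → ι ⊕ κ × Bool)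
      fun i : {i // x i ≠ y i} => Sum.inr (i.1, y i.1)).Injective := by
  refine (select_injective x).sumElim
    (Sum.inr_injective.comp fun i j h => Subtype.ext (Prod.mk.inj h).1) fun a i => ?_
  rcases a with a | a
  · exact Sum.inl_ne_inr
  · intro h
    obtain ⟨rfl, h⟩ := Prod.mk.inj (Sum.inr_injective h)
    exact i.2 h

lemma hammingSeparated_comp_select [Fintype κ] {u : (ι ⊕ κ → E) → E}
    (hu : ∀ T i, ⟪T i, u T⟫ = 0) {ω : ι ⊕ κ × Bool → E} {r t : ℝ} (hr : 0 < r)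
    (hω : ‖analysisOperator fun p => ω (Sum.inr p)‖ ≤ r)
    (hsum : ∀ x y, Fintype.card κ ≤ 8 * hammingDist x y → (r * t) ^ 2 ≤
      ∑ i : {i // x i ≠ y i}, ⟪ω (Sum.inr (i.1, y i.1)), u (ω ∘ select x)⟫ ^ 2) :
    HammingSeparated t fun x => u (ω ∘ select x) := by
  intro x y hxy
  have injective_pair : (fun i : {i // x i ≠ y i} => (i.1, y i.1)).Injective :=
    fun i j h => Subtype.ext (Prod.mk.inj h).1
  have inner_eq_zero (i : κ) : ⟪ω (Sum.inr (i, y i)), u (ω ∘ select y)⟫ = 0 :=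
    hu (ω ∘ select y) (Sum.inr i)
  constructor
  · refine le_norm_of_inner_eq injective_pair (fun i => ?_) hr hω (hsum x y hxy)
    rw [inner_sub_right, inner_eq_zero, sub_zero]
  · refine le_norm_of_inner_eq injective_pair (fun i => ?_) hr hω (hsum x y hxy)
    rw [inner_add_right, inner_eq_zero, add_zero]

variable [FiniteDimensional ℝ E] [MeasurableSpace E] [BorelSpace E]

lemma measureReal_eight_sqrt_finrank_lt_norm_analysisOperator_le [Fintype ι]
    (hι : Fintype.card ι ≤ 2 * Module.finrank ℝ E) :
    (Measure.pi fun _ : ι => stdGaussian E).real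
        {z | 8 * √(Module.finrank ℝ E) < ‖analysisOperator z‖} ≤
      (1 / 5) ^ Module.finrank ℝ E := by
  set d := Module.finrank ℝ E
  refine (measureReal_lt_norm_analysisOperator_le (by positivity)).trans ?_
  have exp_neg_four_le : Real.exp (-4) ≤ 1 / 50 := by
    rw [Real.exp_neg, ← one_div]
    gcongr
    calc (50 : ℝ) ≤ 2.7182818283 ^ 4 := by norm_num
      _ ≤ Real.exp 1 ^ 4 := by gcongr; exact Real.exp_one_gt_d9.le
      _ = Real.exp 4 := by rw [← Real.exp_nat_mul]; norm_num
  calc 5 ^ d * (Real.exp (-(8 * √d) ^ 2 / 16) * √2 ^ Fintype.card ι)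
      = 5 ^ d * (Real.exp (-4) ^ d * √2 ^ Fintype.card ι) := by
        rw [← Real.exp_nat_mul, mul_pow, Real.sq_sqrt (by positivity)]
        ring_nf
    _ ≤ 5 ^ d * ((1 / 50) ^ d * √2 ^ (2 * d)) := by
        gcongr
        exact Real.one_le_sqrt.2 one_le_two
    _ = (1 / 5) ^ d := by
        rw [pow_mul, Real.sq_sqrt zero_le_two, ← mul_pow, ← mul_pow]
        norm_num

lemma measureReal_sum_inner_sq_le_le {J : Type*} [Fintype J] [Finite ι] [Fintype κ] {f : ι → J}
    {g : κ → J} (hfg : (Sum.elim f g).Injective) {u : (ι → E) → E} (hu : Measurable u)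
    (hu1 : ∀ T, ‖u T‖ = 1) {s : ℝ} (hs : 0 < s) (hs1 : s ≤ 1) :
    (Measure.pi fun _ : J => stdGaussian E).real
        {ω | ∑ i, ⟪ω (g i), u (ω ∘ f)⟫ ^ 2 ≤ s ^ 2 * Fintype.card κ} ≤
      (2 * s) ^ Fintype.card κ := by
  refine measureReal_pi_comp_le_of_forall hfg
    (p := fun T z => ∑ i, ⟪z i, u T⟫ ^ 2 ≤ s ^ 2 * Fintype.card κ)
    (measurableSet_le (by fun_prop) measurable_const) fun T => ?_
  exact measureReal_sum_sq_le_le (iIndepFun_inner_pi_stdGaussian (u T))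
    (hasLaw_inner_pi_stdGaussian (hu1 T)) hs hs1

variable [Fintype ι] [Fintype κ] {u : (ι ⊕ κ → E) → E} {s t : ℝ}

lemma measureReal_sum_inner_select_sq_le_le (hu : Measurable u) (hu1 : ∀ T, ‖u T‖ = 1)
    (hs : 0 < s) (hs16 : 2 * s ≤ (1 / 16) ^ 8) {x y : κ → Bool}
    (hxy : Fintype.card κ ≤ 8 * hammingDist x y) :
    (Measure.pi fun _ : ι ⊕ κ × Bool => stdGaussian E).real
        {ω | ∑ i : {i // x i ≠ y i}, ⟪ω (Sum.inr (i.1, y i.1)), u (ω ∘ select x)⟫ ^ 2 ≤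
          s ^ 2 * hammingDist x y} ≤
      (1 / 16) ^ Fintype.card κ := by
  have card_eq : Fintype.card {i // x i ≠ y i} = hammingDist x y := Fintype.card_subtype _
  have le_pow := measureReal_sum_inner_sq_le_le (elim_select_injective (ι := ι) x y) hu hu1 hs
    (by linarith)
  rw [card_eq] at le_pow
  calc _ ≤ (2 * s) ^ hammingDist x y := le_pow
    _ ≤ ((1 / 16) ^ 8) ^ hammingDist x y := by gcongr
    _ ≤ (1 / 16) ^ Fintype.card κ := by
      rw [← pow_mul]
      exact pow_le_pow_of_le_one (by norm_num) (by norm_num) hxy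

lemma measureReal_exists_sum_inner_select_sq_le_le (hu : Measurable u) (hu1 : ∀ T, ‖u T‖ = 1)
    (hs : 0 < s) (hs16 : 2 * s ≤ (1 / 16) ^ 8) :
    (Measure.pi fun _ : ι ⊕ κ × Bool => stdGaussian E).real
        {ω | ∃ x y, Fintype.card κ ≤ 8 * hammingDist x y ∧
          ∑ i : {i // x i ≠ y i}, ⟪ω (Sum.inr (i.1, y i.1)), u (ω ∘ select x)⟫ ^ 2 ≤
            s ^ 2 * hammingDist x y} ≤
      (1 / 4) ^ Fintype.card κ := by
  classical
  set μ := Measure.pi fun _ : ι ⊕ κ × Bool => stdGaussian E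
  let B (p : (κ → Bool) × (κ → Bool)) : Set (ι ⊕ κ × Bool → E) :=
    {ω | ∑ i : {i // p.1 i ≠ p.2 i}, ⟪ω (Sum.inr (i.1, p.2 i.1)), u (ω ∘ select p.1)⟫ ^ 2 ≤
      s ^ 2 * hammingDist p.1 p.2}
  calc _ ≤ μ.real (⋃ p ∈ ({p | Fintype.card κ ≤ 8 * hammingDist p.1 p.2} : Finset _), B p) := by
        refine measureReal_mono ?_ (measure_ne_top _ _)
        rintro ω ⟨x, y, hxy, hω⟩
        exact Set.mem_biUnion (x := (x, y)) (by simpa using hxy) hω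
    _ ≤ ∑ p with Fintype.card κ ≤ 8 * hammingDist p.1 p.2, μ.real (B p) :=
        measureReal_biUnion_finset_le _ _
    _ ≤ ∑ p : (κ → Bool) × (κ → Bool) with Fintype.card κ ≤ 8 * hammingDist p.1 p.2,
          (1 / 16) ^ Fintype.card κ := by
        refine Finset.sum_le_sum fun p hp => ?_
        exact measureReal_sum_inner_select_sq_le_le hu hu1 hs hs16 (Finset.mem_filter.1 hp).2
    _ ≤ ∑ _p : (κ → Bool) × (κ → Bool), (1 / 16) ^ Fintype.card κ :=
        Finset.sum_le_sum_of_subset_of_nonneg (Finset.filter_subset _ _) fun _ _ _ => by positivity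
    _ = (1 / 4) ^ Fintype.card κ := by
        simp only [Finset.sum_const, Finset.card_univ, Fintype.card_prod, Fintype.card_fun,
          Fintype.card_bool, nsmul_eq_mul, Nat.cast_mul, Nat.cast_pow, Nat.cast_ofNat, ← mul_pow]
        norm_num

lemma one_fifth_pow_add_one_fourth_pow_le {k m : ℕ} (hk : 0 < k) (hkm : k ≤ m) :
    (1 / 5 : ℝ) ^ m + (1 / 4) ^ k ≤ (1 / 2) ^ k := by
  calc (1 / 5 : ℝ) ^ m + (1 / 4) ^ k ≤ (1 / 5) ^ k + (1 / 4) ^ k :=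
        add_le_add_left (pow_le_pow_of_le_one (by norm_num) (by norm_num) hkm) _
    _ ≤ (1 / 4) ^ k + (1 / 4) ^ k := by gcongr; norm_num
    _ = (1 / 2) ^ k * (2 * (1 / 2) ^ k) := by
        rw [mul_left_comm, ← mul_pow]
        norm_num [two_mul]
    _ ≤ (1 / 2) ^ k * (2 * (1 / 2)) := by
        gcongr
        exact pow_le_of_le_one (by norm_num) (by norm_num) hk.ne'
    _ = (1 / 2) ^ k := by ring

lemma measureReal_not_hammingSeparated_le [Nonempty κ]
    (hκ : Fintype.card κ ≤ Module.finrank ℝ E) (hu : Measurable u) (hu1 : ∀ T, ‖u T‖ = 1)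
    (hu0 : ∀ T i, ⟪T i, u T⟫ = 0) (hs : 0 < s) (hs16 : 2 * s ≤ (1 / 16) ^ 8)
    (hst : 512 * Module.finrank ℝ E * t ^ 2 ≤ s ^ 2 * Fintype.card κ) :
    (Measure.pi fun _ : ι ⊕ κ × Bool => stdGaussian E).real
        {ω | ¬ HammingSeparated t fun x => u (ω ∘ select x)} ≤
      (1 / 2) ^ Fintype.card κ := by
  set μ := Measure.pi fun _ : ι ⊕ κ × Bool => stdGaussian E
  set d := Module.finrank ℝ E
  set k := Fintype.card κ
  have k_pos : 0 < k := Fintype.card_pos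
  have d_pos : 0 < d := by omega
  let A : Set (ι ⊕ κ × Bool → E) := {ω | 8 * √d < ‖analysisOperator fun p => ω (Sum.inr p)‖}
  let B : Set (ι ⊕ κ × Bool → E) := {ω | ∃ x y, k ≤ 8 * hammingDist x y ∧
    ∑ i : {i // x i ≠ y i}, ⟪ω (Sum.inr (i.1, y i.1)), u (ω ∘ select x)⟫ ^ 2 ≤
      s ^ 2 * hammingDist x y}
  have A_le : μ.real A ≤ (1 / 5) ^ d := by
    refine ((hasLaw_pi_comp (stdGaussian E) Sum.inr_injective).measureReal_eq
      (measurableSet_lt measurable_const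
        continuous_norm_analysisOperator.measurable)).trans_le ?_
    refine measureReal_eight_sqrt_finrank_lt_norm_analysisOperator_le ?_
    rw [Fintype.card_prod, Fintype.card_bool]
    omega
  have subset_union : {ω | ¬ HammingSeparated t fun x => u (ω ∘ select x)} ⊆ A ∪ B := by
    intro ω hω
    contrapose! hω
    simp only [A, B, Set.mem_union, Set.mem_ofPred_eq, not_or, not_lt, not_exists, not_and, not_le,
      not_not] at hω ⊢
    refine hammingSeparated_comp_select hu0 (by positivity) hω.1 fun x y hxy => ?_
    refine le_trans ?_ (hω.2 x y hxy).le
    rw [← Nat.cast_le (α := ℝ)] at hxy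
    push_cast at hxy
    rw [mul_pow, mul_pow, Real.sq_sqrt (by positivity)]
    nlinarith [sq_nonneg s]
  calc _ ≤ μ.real A + μ.real B :=
        (measureReal_mono subset_union).trans (measureReal_union_le A B)
    _ ≤ (1 / 5) ^ d + (1 / 4) ^ k :=
        add_le_add A_le (measureReal_exists_sum_inner_select_sq_le_le hu hu1 hs hs16)
    _ ≤ (1 / 2) ^ k := one_fifth_pow_add_one_fourth_pow_le k_pos hκ

end Separation

section NearlyDegenerate

variable {E : Type*} [NormedAddCommGroup E] [InnerProductSpace ℝ E]

/-- Some `finrank ℝ E` members of the family `ω` are together nearly orthogonal to one unit vector.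
For the columns of a matrix this says that a maximal square submatrix has a left singular value at
most `η`. -/
def HasNearlyDegenerateSubfamily {J : Type*} (η : ℝ) (ω : J → E) : Prop :=
  ∃ s : Finset J, s.card = Module.finrank ℝ E ∧ ∃ v : E, ‖v‖ = 1 ∧ ∑ j ∈ s, ⟪ω j, v⟫ ^ 2 ≤ η ^ 2

lemma HasNearlyDegenerateSubfamily.of_comp {J J' : Type*} {η : ℝ} {ω : J → E} (e : J' ↪ J)
    (h : HasNearlyDegenerateSubfamily η (ω ∘ e)) : HasNearlyDegenerateSubfamily η ω := by
  obtain ⟨s, s_card, v, hv, hsum⟩ := h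
  exact ⟨s.map e, by rwa [Finset.card_map], v, hv, by rwa [Finset.sum_map]⟩

variable {ι κ α : Type*} [Fintype ι] [Fintype κ] {u : (ι ⊕ κ → E) → E} {t : ℝ}

lemma hasNearlyDegenerateSubfamily_of_abs_inner_le
    (hd : Module.finrank ℝ E = Fintype.card ι + Fintype.card κ + 1) (hu1 : ∀ T, ‖u T‖ = 1)
    (hu0 : ∀ T i, ⟪T i, u T⟫ = 0) {ω : (ι ⊕ κ × Bool) ⊕ α → E} {η : ℝ} {j : α} {x : κ → Bool}
    (h : |⟪ω (Sum.inr j), u ((ω ∘ Sum.inl) ∘ select x)⟫| ≤ η) :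
    HasNearlyDegenerateSubfamily η ω := by
  refine ⟨(Finset.univ.map ⟨select x, select_injective x⟩).disjSum {j}, ?_, _,
    hu1 ((ω ∘ Sum.inl) ∘ select x), ?_⟩
  · simp [hd]
  · rw [Finset.sum_disjSum, Finset.sum_map, Finset.sum_singleton]
    have inner_eq_zero (i : ι ⊕ κ) :
        ⟪ω (Sum.inl (select x i)), u ((ω ∘ Sum.inl) ∘ select x)⟫ = 0 :=
      hu0 ((ω ∘ Sum.inl) ∘ select x) i
    simp only [Function.Embedding.coeFn_mk, inner_eq_zero, ne_eq, OfNat.ofNat_ne_zero,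
      not_false_eq_true, zero_pow, Finset.sum_const_zero, zero_add]
    exact sq_le_sq' (neg_le_of_abs_le h) (le_of_abs_le h)

variable [FiniteDimensional ℝ E] [MeasurableSpace E] [BorelSpace E]

lemma measurableSet_hammingSeparated {Ω : Type*} [MeasurableSpace Ω] {U : Ω → (κ → Bool) → E}
    (hU : ∀ x, Measurable fun ω => U ω x) : MeasurableSet {ω | HammingSeparated t (U ω)} := by
  simp only [HammingSeparated, Set.ofPred_forall]
  refine .iInter fun x => .iInter fun y => .iInter fun _ => ?_
  exact (measurableSet_le measurable_const ((hU x).sub (hU y)).norm).inter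
    (measurableSet_le measurable_const ((hU x).add (hU y)).norm)

lemma measureReal_forall_lt_abs_inner_le [Fintype α] {U : (κ → Bool) → E} (hU1 : ∀ x, ‖U x‖ = 1)
    (hU : HammingSeparated t U) (ht : 0 < t) :
    (Measure.pi fun _ : α => stdGaussian E).real
        {b | ∀ j x, (3 / 4) ^ Fintype.card κ < |⟪b j, U x⟫|} ≤
      (1 - (4 + 16 / t)⁻¹) ^ Fintype.card α := by
  let H : Set E := {b | ∃ x, |⟪b, U x⟫| ≤ (3 / 4) ^ Fintype.card κ}
  have H_measurable : MeasurableSet H := by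
    simp only [H, Set.ofPred_exists]
    exact .iUnion fun x => measurableSet_le (by fun_prop) measurable_const
  have eq_pi : {b : α → E | ∀ j x, (3 / 4) ^ Fintype.card κ < |⟪b j, U x⟫|} =
      Set.univ.pi fun _ => Hᶜ := by
    ext b
    simp [H]
  rw [eq_pi, measureReal_def, Measure.pi_pi, ENNReal.toReal_prod, Finset.prod_const,
    Finset.card_univ, ← measureReal_def, probReal_compl_eq_one_sub H_measurable]
  exact pow_le_pow_left₀ (sub_nonneg.2 measureReal_le_one)
    (sub_le_sub_left (hU.inv_le_stdGaussian_real ht hU1) 1) _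

lemma measureReal_hammingSeparated_and_forall_lt_abs_inner_le [Fintype α] (hu : Measurable u)
    (hu1 : ∀ T, ‖u T‖ = 1) (ht : 0 < t) :
    (Measure.pi fun _ : (ι ⊕ κ × Bool) ⊕ α => stdGaussian E).real
        {ω | HammingSeparated t (fun x => u ((ω ∘ Sum.inl) ∘ select x)) ∧
          ∀ j x, (3 / 4) ^ Fintype.card κ < |⟪ω (Sum.inr j), u ((ω ∘ Sum.inl) ∘ select x)⟫|} ≤
      (1 - (4 + 16 / t)⁻¹) ^ Fintype.card α := by
  have comp_measurable (x : κ → Bool) :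
      Measurable fun T : ι ⊕ κ × Bool → E => u (T ∘ select x) :=
    hu.comp (measurable_pi_lambda _ fun i => measurable_pi_apply (select x i))
  refine measureReal_pi_comp_le_of_forall (by simp [Function.injective_id])
    (p := fun T z => HammingSeparated t (fun x => u (T ∘ select x)) ∧
      ∀ j x, (3 / 4) ^ Fintype.card κ < |⟪z j, u (T ∘ select x)⟫|) ?_ fun T => ?_
  · have lt_measurable : MeasurableSet {q : (ι ⊕ κ × Bool → E) × (α → E) |
        ∀ j x, (3 / 4) ^ Fintype.card κ < |⟪q.2 j, u (q.1 ∘ select x)⟫|} := by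
      simp only [Set.ofPred_forall]
      refine .iInter fun j => .iInter fun x => measurableSet_lt measurable_const ?_
      exact (((measurable_pi_apply j).comp measurable_snd).inner
        ((comp_measurable x).comp measurable_fst)).abs
    exact (measurable_fst (measurableSet_hammingSeparated comp_measurable)).inter lt_measurable
  · by_cases hT : HammingSeparated t fun x => u (T ∘ select x)
    · simpa only [hT, true_and] using measureReal_forall_lt_abs_inner_le (fun x => hu1 _) hT ht
    · have one_le : 1 ≤ 4 + 16 / t := by linarith [div_pos (by norm_num : (0 : ℝ) < 16) ht]
      simp only [hT, false_and, Set.ofPred_false, measureReal_empty]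
      exact pow_nonneg (sub_nonneg.2 (inv_le_one_of_one_le₀ one_le)) _

lemma measureReal_not_hasNearlyDegenerateSubfamily_le [Nonempty κ]
    (hd : Module.finrank ℝ E = Fintype.card ι + Fintype.card κ + 1) {s : ℝ} (hs : 0 < s)
    (hs16 : 2 * s ≤ (1 / 16) ^ 8) (ht : 0 < t)
    (hst : 512 * Module.finrank ℝ E * t ^ 2 ≤ s ^ 2 * Fintype.card κ) :
    (Measure.pi fun _ : (ι ⊕ κ × Bool) ⊕ κ => stdGaussian E).real
        {ω | ¬ HasNearlyDegenerateSubfamily ((3 / 4) ^ Fintype.card κ) ω} ≤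
      2 * (1 - (4 + 16 / t)⁻¹) ^ Fintype.card κ := by
  obtain ⟨u, hu, hu'⟩ := exists_measurable_unit_orthogonal (E := E) (ι := ι ⊕ κ)
    (by rw [hd, Fintype.card_sum]; omega)
  choose hu1 hu0 using hu'
  set k := Fintype.card κ
  set μ := Measure.pi fun _ : (ι ⊕ κ × Bool) ⊕ κ => stdGaussian E
  let Sep (T : ι ⊕ κ × Bool → E) : Prop := HammingSeparated t fun x => u (T ∘ select x)
  have Sep_measurable : MeasurableSet {T | Sep T} := measurableSet_hammingSeparated fun x =>
    hu.comp (measurable_pi_lambda _ fun i => measurable_pi_apply (select x i))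
  have inv_le : (4 + 16 / t)⁻¹ ≤ (2 : ℝ)⁻¹ := inv_anti₀ two_pos (by
    linarith [div_pos (by norm_num : (0 : ℝ) < 16) ht])
  calc _ ≤ μ.real ({ω | ¬ Sep (ω ∘ Sum.inl)} ∪ {ω | Sep (ω ∘ Sum.inl) ∧
          ∀ j x, (3 / 4) ^ k < |⟪ω (Sum.inr j), u ((ω ∘ Sum.inl) ∘ select x)⟫|}) := by
        refine measureReal_mono fun ω hω => or_iff_not_imp_left.2 fun hSep =>
          ⟨not_not.1 hSep, fun j x => ?_⟩
        contrapose! hω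
        exact not_not.2 (hasNearlyDegenerateSubfamily_of_abs_inner_le hd hu1 hu0 hω)
    _ ≤ (1 / 2) ^ k + (1 - (4 + 16 / t)⁻¹) ^ k := by
        refine (measureReal_union_le _ _).trans (add_le_add ?_
          (measureReal_hammingSeparated_and_forall_lt_abs_inner_le hu hu1 ht))
        exact ((hasLaw_pi_comp _ Sum.inl_injective).measureReal_eq Sep_measurable.compl).trans_le
          (measureReal_not_hammingSeparated_le (by omega) hu hu1 hu0 hs hs16 hst)
    _ ≤ (1 - (4 + 16 / t)⁻¹) ^ k + (1 - (4 + 16 / t)⁻¹) ^ k := by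
        gcongr
        linarith
    _ = 2 * (1 - (4 + 16 / t)⁻¹) ^ k := (two_mul _).symm

end NearlyDegenerate

section SigmaMin

variable {d : ℕ} {M : Matrix (Fin d) (Fin d) ℝ} {η : ℝ}

lemma sigmaMin_le_of_norm_mulVec_le {x : EuclideanSpace ℝ (Fin d)} (hx : x ≠ 0)
    (h : ‖WithLp.toLp 2 (M.mulVec x.ofLp)‖ ≤ η * ‖x‖) : sigmaMin M ≤ η := by
  have norm_pos : 0 < ‖x‖ := norm_pos_iff.2 hx
  refine le_trans (csInf_le ⟨0, ?_⟩ ⟨‖x‖⁻¹ • x, norm_smul_inv_norm hx, rfl⟩) ?_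
  · rintro r ⟨y, -, rfl⟩
    positivity
  · rw [map_smul, Matrix.mulVec_smul, map_smul, norm_smul, norm_inv, norm_norm,
      inv_mul_le_iff₀ norm_pos, mul_comm]
    exact h

lemma sigmaMin_le_of_sum_sq_le {u : EuclideanSpace ℝ (Fin d)} (hu : ‖u‖ = 1) (hη : 0 ≤ η)
    (h : ∑ j, (∑ i, M i j * u i) ^ 2 ≤ η ^ 2) : sigmaMin M ≤ η := by
  by_cases hdet : M.det = 0
  · obtain ⟨v, v_ne_zero, hv⟩ := Matrix.exists_mulVec_eq_zero_iff.2 hdet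
    refine sigmaMin_le_of_norm_mulVec_le (x := WithLp.toLp 2 v) (by simpa using v_ne_zero) ?_
    rw [hv, WithLp.toLp_zero, norm_zero]
    positivity
  · set y : EuclideanSpace ℝ (Fin d) := WithLp.toLp 2 (M⁻¹.mulVec u.ofLp) with hy
    set w : EuclideanSpace ℝ (Fin d) := WithLp.toLp 2 (M.transpose.mulVec u.ofLp)
    have mulVec_y : M.mulVec y.ofLp = u.ofLp := by
      rw [hy, Matrix.mulVec_mulVec, Matrix.mul_nonsing_inv _ (isUnit_iff_ne_zero.2 hdet),
        Matrix.one_mulVec]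
    have norm_w_le : ‖w‖ ≤ η := by
      refine le_of_sq_le_sq ?_ hη
      rwa [EuclideanSpace.real_norm_sq_eq]
    have inner_w_y : ⟪w, y⟫ = 1 := by
      calc ⟪w, y⟫ = ⟪u, WithLp.toLp 2 (M.mulVec y.ofLp)⟫ := by
            rw [EuclideanSpace.inner_eq_star_dotProduct, EuclideanSpace.inner_eq_star_dotProduct,
              star_trivial, star_trivial, Matrix.dotProduct_mulVec, Matrix.vecMul_transpose]
        _ = 1 := by rw [mulVec_y, WithLp.toLp_ofLp, real_inner_self_eq_norm_sq, hu, one_pow]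
    have one_le : 1 ≤ η * ‖y‖ :=
      inner_w_y.ge.trans ((real_inner_le_norm _ _).trans (by gcongr))
    refine sigmaMin_le_of_norm_mulVec_le (x := y) ?_ ?_
    · rintro hy0
      rw [hy0, norm_zero, mul_zero] at one_le
      exact zero_lt_one.not_ge one_le
    · rwa [mulVec_y, WithLp.toLp_ofLp, hu]

end SigmaMin

section Columns

/-- The columns of a matrix, as vectors of a Euclidean space. -/
noncomputable def columns {I J : Type*} (A : I → J → ℝ) (j : J) : EuclideanSpace ℝ I :=
  WithLp.toLp 2 fun i => A i j

lemma exists_sigmaMin_le_of_hasNearlyDegenerateSubfamily {d n : ℕ} {A : Fin d → Fin n → ℝ} {η : ℝ}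
    (hη : 0 ≤ η) (h : HasNearlyDegenerateSubfamily η (columns A)) :
    ∃ S : Finset (Fin n), ∃ hS : S.card = d,
      sigmaMin (Matrix.of fun i j => A i (S.orderEmbOfFin hS j)) ≤ η := by
  obtain ⟨S, hS, v, hv, hsum⟩ := h
  rw [finrank_euclideanSpace_fin] at hS
  refine ⟨S, hS, sigmaMin_le_of_sum_sq_le hv hη ?_⟩
  rw [← S.map_orderEmbOfFin_univ hS, Finset.sum_map] at hsum
  simpa [columns, PiLp.inner_apply, mul_comm] using hsum

variable {I J : Type*} [Fintype I] [Fintype J]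

lemma hasLaw_pi_flip {E : Type*} [MeasurableSpace E] (P : Measure E) [IsProbabilityMeasure P] :
    HasLaw (fun (A : I → J → E) j i => A i j) (Measure.pi fun _ => Measure.pi fun _ => P)
      (Measure.pi fun _ => Measure.pi fun _ => P) := by
  have uncurry : HasLaw (MeasurableEquiv.curry I J E).symm (Measure.pi fun _ => P)
      (Measure.pi fun _ => Measure.pi fun _ => P) := by
    refine ⟨by fun_prop, ?_⟩
    simpa only [Measure.infinitePi_eq_pi] using
      Measure.infinitePi_map_curry_symm fun (_ : I) (_ : J) => P
  have curry : HasLaw (MeasurableEquiv.curry J I E) (Measure.pi fun _ => Measure.pi fun _ => P)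
      (Measure.pi fun _ => P) := by
    refine ⟨by fun_prop, ?_⟩
    simpa only [Measure.infinitePi_eq_pi] using
      Measure.infinitePi_map_curry fun (_ : J) (_ : I) => P
  exact curry.comp ((hasLaw_pi_comp P Prod.swap_injective).comp uncurry)

lemma hasLaw_columns :
    HasLaw (columns : (I → J → ℝ) → J → EuclideanSpace ℝ I) (Measure.pi fun _ => stdGaussian _)
      (Measure.pi fun _ => Measure.pi fun _ => gaussianReal 0 1) := by
  have toLp : HasLaw (fun (B : J → I → ℝ) j => WithLp.toLp 2 (B j))
      (Measure.pi fun _ => stdGaussian (EuclideanSpace ℝ I))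
      (Measure.pi fun _ => Measure.pi fun _ => gaussianReal 0 1) := by
    refine ⟨Measurable.aemeasurable (by fun_prop), ?_⟩
    rw [Measure.pi_map_pi (f := fun _ => WithLp.toLp 2) fun _ => by fun_prop]
    simp only [map_pi_eq_stdGaussian]
  exact toLp.comp (hasLaw_pi_flip _)

end Columns

section Probability

lemma measureReal_preimage_le_of_hasLaw {Ω α : Type*} [MeasurableSpace Ω] [MeasurableSpace α]
    {P : Measure Ω} {μ : Measure α} [IsFiniteMeasure μ] {X : Ω → α} (hX : HasLaw X μ P)
    (s : Set α) : P.real (X ⁻¹' s) ≤ μ.real s := by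
  refine ENNReal.toReal_mono (measure_ne_top μ s) ?_
  rw [← hX.map_eq]
  exact Measure.le_map_apply hX.aemeasurable s

lemma ofReal_one_sub_le_measure {Ω : Type*} [MeasurableSpace Ω] {P : Measure Ω}
    [IsProbabilityMeasure P] {s : Set Ω} {c : ℝ} (h : P.real sᶜ ≤ c) :
    ENNReal.ofReal (1 - c) ≤ P s := by
  refine ENNReal.ofReal_le_of_le_toReal ?_
  have one_le : 1 ≤ P.real s + P.real sᶜ := by
    rw [← probReal_univ (μ := P), ← Set.union_compl_self s]
    exact measureReal_union_le s sᶜ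
  rw [← measureReal_def]
  linarith

lemma measureReal_not_exists_sigmaMin_le {d n k : ℕ} (hk : 0 < k) (hkd : k < d)
    (hdn : d + 2 * k ≤ n + 1) {s t : ℝ} (hs : 0 < s) (hs16 : 2 * s ≤ (1 / 16) ^ 8) (ht : 0 < t)
    (hst : 512 * d * t ^ 2 ≤ s ^ 2 * k) :
    (Measure.pi fun _ : Fin d => Measure.pi fun _ : Fin n => gaussianReal 0 1).real
        {A | ¬ ∃ S : Finset (Fin n), ∃ hS : S.card = d,
          sigmaMin (Matrix.of fun i j => A i (S.orderEmbOfFin hS j)) ≤ (3 / 4) ^ k} ≤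
      2 * (1 - (4 + 16 / t)⁻¹) ^ k := by
  have : NeZero k := ⟨hk.ne'⟩
  let J := (Fin (d - 1 - k) ⊕ Fin k × Bool) ⊕ Fin k
  obtain ⟨e⟩ : Nonempty (J ↪ Fin n) := by
    refine Function.Embedding.nonempty_of_card_le ?_
    simp only [J, Fintype.card_sum, Fintype.card_prod, Fintype.card_fin, Fintype.card_bool]
    omega
  have degenerate_le := measureReal_not_hasNearlyDegenerateSubfamily_le (ι := Fin (d - 1 - k))
    (κ := Fin k) (E := EuclideanSpace ℝ (Fin d)) (by simp; omega) hs hs16 ht (by simpa using hst)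
  rw [Fintype.card_fin] at degenerate_le
  refine ((measureReal_mono ?_).trans (measureReal_preimage_le_of_hasLaw
    ((hasLaw_pi_comp _ e.injective).comp hasLaw_columns) _)).trans degenerate_le
  intro A hA hdeg
  exact hA (exists_sigmaMin_le_of_hasNearlyDegenerateSubfamily (by positivity) (hdeg.of_comp e))

end Probability

section Constants

lemma exists_forall_exists_block_size {c₀ : ℝ} (hc₀ : 1 < c₀) :
    ∃ N > 0, ∀ d n : ℕ, N ≤ d → c₀ ≤ (n : ℝ) / d →
      ∃ k, 0 < k ∧ k < d ∧ d + 2 * k ≤ n + 1 ∧ d ≤ N * k := by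
  obtain ⟨M, hM⟩ := exists_nat_ge (2 / (c₀ - 1))
  refine ⟨2 * (M + 2), by positivity, fun d n hd hn => ⟨d / (M + 2), ?_, ?_, ?_, ?_⟩⟩
  · exact Nat.div_pos (by omega) (by positivity)
  · exact Nat.div_lt_self (by omega) (by omega)
  · have two_le : 2 ≤ M * (c₀ - 1) := (div_le_iff₀ (by linarith)).1 hM
    have hcd : c₀ * d ≤ n := (le_div_iff₀ (Nat.cast_pos.2 (by omega))).1 hn
    have mul_div_le : (M * (d / (M + 2) : ℕ) : ℝ) ≤ d := by
      exact_mod_cast (Nat.mul_le_mul_right _ (by omega)).trans (Nat.mul_div_le d (M + 2))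
    have add_le : (d + 2 * (d / (M + 2) : ℕ) : ℝ) ≤ n := by
      calc (d + 2 * (d / (M + 2) : ℕ) : ℝ) ≤ d + M * (c₀ - 1) * (d / (M + 2) : ℕ) := by gcongr
        _ = d + M * (d / (M + 2) : ℕ) * (c₀ - 1) := by ring
        _ ≤ d + d * (c₀ - 1) := by gcongr
        _ ≤ n := by linarith
    exact_mod_cast add_le.trans (le_add_of_nonneg_right zero_le_one)
  · have lt_mul := Nat.lt_mul_div_succ d (show 0 < M + 2 by omega)
    nlinarith [Nat.div_pos (show M + 2 ≤ d by omega) (by positivity)]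

lemma exists_forall_measureReal_not_exists_sigmaMin_le {c₀ : ℝ} (hc₀ : 1 < c₀) :
    ∃ N > 0, ∃ c : ℝ, 1 / 2 ≤ c ∧ c < 1 ∧ ∀ d n : ℕ, N ≤ d → c₀ ≤ (n : ℝ) / d →
      ∃ k, d ≤ N * k ∧
        (Measure.pi fun _ : Fin d => Measure.pi fun _ : Fin n => gaussianReal 0 1).real
          {A | ¬ ∃ S : Finset (Fin n), ∃ hS : S.card = d,
            sigmaMin (Matrix.of fun i j => A i (S.orderEmbOfFin hS j)) ≤ (3 / 4) ^ k} ≤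
        2 * c ^ k := by
  obtain ⟨N, N_pos, hN⟩ := exists_forall_exists_block_size hc₀
  set s : ℝ := (1 / 16) ^ 8 / 2 with hs
  set t : ℝ := s / √(512 * N) with ht
  have t_pos : 0 < t := by positivity
  have sq_t : 512 * N * t ^ 2 = s ^ 2 := by
    rw [ht, div_pow, Real.sq_sqrt (by positivity), mul_div_cancel₀ _ (by positivity)]
  refine ⟨N, N_pos, 1 - (4 + 16 / t)⁻¹, ?_, ?_, fun d n hd hn => ?_⟩
  · have : (4 + 16 / t)⁻¹ ≤ (2 : ℝ)⁻¹ := inv_anti₀ two_pos (by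
      linarith [div_pos (by norm_num : (0 : ℝ) < 16) t_pos])
    linarith
  · exact sub_lt_self 1 (by positivity)
  · obtain ⟨k, k_pos, hkd, hdn, hdk⟩ := hN d n hd hn
    refine ⟨k, hdk, measureReal_not_exists_sigmaMin_le k_pos hkd hdn (s := s) (by positivity)
      (by rw [hs]; norm_num) t_pos ?_⟩
    calc 512 * d * t ^ 2 ≤ 512 * (N * k) * t ^ 2 := by gcongr; exact mod_cast hdk
      _ = s ^ 2 * k := by rw [← sq_t]; ring

lemma exists_forall_measureReal_not_exists_sigmaMin_le_inv_pow {c₀ : ℝ} (hc₀ : 1 < c₀) :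
    ∃ N : ℕ, ∃ q r : ℝ, 1 < q ∧ 0 < r ∧ r < 1 ∧ 1 / 2 ≤ r ^ N ∧
      ∀ d n : ℕ, N ≤ d → c₀ ≤ (n : ℝ) / d →
        (Measure.pi fun _ : Fin d => Measure.pi fun _ : Fin n => gaussianReal 0 1).real
          {A | ¬ ∃ S : Finset (Fin n), ∃ hS : S.card = d,
            sigmaMin (Matrix.of fun i j => A i (S.orderEmbOfFin hS j)) ≤ (q ^ d)⁻¹} ≤
        2 * r ^ d := by
  obtain ⟨N, N_pos, c, half_le_c, c_lt_one, hN⟩ :=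
    exists_forall_measureReal_not_exists_sigmaMin_le hc₀
  obtain ⟨q, one_lt_q, hq⟩ : ∃ q : ℝ, 1 < q ∧ q ^ N = 4 / 3 :=
    ⟨_, Real.one_lt_rpow (by norm_num) (by positivity),
      Real.rpow_inv_natCast_pow (by norm_num) N_pos.ne'⟩
  obtain ⟨r, r_pos, r_lt_one, hr⟩ : ∃ r : ℝ, 0 < r ∧ r < 1 ∧ r ^ N = c :=
    ⟨_, by positivity, Real.rpow_lt_one (by linarith) c_lt_one (by positivity),
      Real.rpow_inv_natCast_pow (by linarith) N_pos.ne'⟩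
  refine ⟨N, q, r, one_lt_q, r_pos, r_lt_one, half_le_c.trans hr.ge, fun d n hNd hn => ?_⟩
  obtain ⟨k, hdk, fail_le⟩ := hN d n hNd hn
  have eta_le : (3 / 4 : ℝ) ^ k ≤ (q ^ d)⁻¹ := by
    rw [← inv_div, inv_pow, ← hq, ← pow_mul]
    exact inv_anti₀ (by positivity) (pow_le_pow_right₀ one_lt_q.le hdk)
  have pow_c_le : c ^ k ≤ r ^ d := by
    rw [← hr, ← pow_mul]
    exact pow_le_pow_of_le_one r_pos.le r_lt_one.le hdk
  refine (measureReal_mono fun A hA => ?_).trans (fail_le.trans (by gcongr))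
  exact fun ⟨S, hS, h⟩ => hA ⟨S, hS, h.trans eta_le⟩

end Constants

/-- Theorem (smoothed analysis of matrix conditioning): for a `d`-by-`n` matrix with iid
standard Gaussian entries, `d ≥ 2` and `n/d ≥ c₀ > 1`, there are constants `c₂, c₄ > 1`,
`0 < c₆ < 1` (depending only on `c₀`) such that with probability at least `1 - 2 c₄ c₆ ^ d`,
some `d`-by-`d` column submatrix has smallest singular value at most `1/(c₄ c₂ ^ (d-1))`. -/
theorem stmt0 (c₀ : ℝ) (hc₀ : 1 < c₀) :
    ∃ c₂ c₄ c₆ : ℝ, 1 < c₂ ∧ 1 < c₄ ∧ 0 < c₆ ∧ c₆ < 1 ∧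
      ∀ d n : ℕ, 2 ≤ d → c₀ ≤ (n : ℝ) / (d : ℝ) →
        ENNReal.ofReal (1 - 2 * c₄ * c₆ ^ d) ≤
          (Measure.pi fun _ : Fin d => Measure.pi fun _ : Fin n => gaussianReal 0 1)
            {A : Fin d → Fin n → ℝ | ∃ S : Finset (Fin n), ∃ hS : S.card = d,
              sigmaMin (Matrix.of fun i j => A i (S.orderEmbOfFin hS j)) ≤
                1 / (c₄ * c₂ ^ (d - 1))} := by
  obtain ⟨N, q, r, one_lt_q, r_pos, r_lt_one, half_le, fail_le⟩ :=
    exists_forall_measureReal_not_exists_sigmaMin_le_inv_pow hc₀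
  refine ⟨q, q, r, one_lt_q, one_lt_q, r_pos, r_lt_one, fun d n hd hn => ?_⟩
  have pow_le : 2 * r ^ d ≤ 2 * q * r ^ d := by nlinarith [pow_pos r_pos d]
  obtain hdN | hNd := lt_or_ge d N
  · have half_le_pow : 1 / 2 ≤ r ^ d :=
      half_le.trans (pow_le_pow_of_le_one r_pos.le r_lt_one.le hdN.le)
    exact (ENNReal.ofReal_of_nonpos (by linarith)).trans_le bot_le
  · rw [mul_pow_sub_one (by omega), one_div]
    exact ofReal_one_sub_le_measure ((fail_le d n hNd hn).trans pow_le)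
end

section
/- Let d ≥ 2 and let A be a d-by-n random matrix whose entries are independent standard Gaussian random variables, with 1 < n/(d−1) ≤ C₀ for some constant C₀. Then there exist constants C₁ > 1 and 0 < C₂ < 1, depending only on C₀, such that with probability at least 1 − n·C₂^{d−1} one has min over subsets S ⊆ [n] with |S| = d of σ_d(A_S) ≥ 1/C₁^{d−1}. -/
open MeasureTheory ProbabilityTheory

/-!
If `‖M x‖ < ε` for a unit vector `x ∈ ℝ^d`, then some `|x j| ≥ 1 / d`, so the column `j` of `M`
lies within `d ε` of the span of the other columns. When the columns are independent, condition on
the others: their span is orthogonal to some `u ≠ 0`, and freezing all the coordinates of column `j`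
except the one at which `|u k|` is largest leaves a real variable with density at most `K` in an
interval of length at most `2 d² ε`. Hence `σ_d(A_S) < ε` has probability at most `2 K d³ ε` for
each `S`. A union bound over the at most `2 ^ n ≤ 2 ^ (⌈C₀⌉ (d - 1))` sets `S` loses only an
exponential factor, which `ε = C₁ ^ (-(d - 1))` absorbs.
-/

open scoped ENNReal NNReal Matrix

section Distance

variable {ι E : Type*} [NormedAddCommGroup E] [NormedSpace ℝ E]

/-- The distance from `v j` to the linear span of the other vectors of the family `v`.
If it is large for every `j`, no unit combination of the vectors `v j` can be small. -/
noncomputable def distSpanOthers (v : ι → E) (j : ι) : ℝ :=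
  Metric.infDist (v j) (Submodule.span ℝ (v '' {j}ᶜ))

theorem distSpanOthers_update_self [DecidableEq ι] (v : ι → E) (j : ι) (y : E) :
    distSpanOthers (Function.update v j y) j =
      Metric.infDist y (Submodule.span ℝ (v '' {j}ᶜ)) := by
  have himage : Function.update v j y '' {j}ᶜ = v '' {j}ᶜ :=
    Set.image_congr fun _ hl => Function.update_of_ne hl _ _
  rw [distSpanOthers, Function.update_self, himage]

theorem abs_mul_distSpanOthers_le_norm_sum [Fintype ι] (v : ι → E) (x : ι → ℝ) (j : ι) :
    |x j| * distSpanOthers v j ≤ ‖∑ l, x l • v l‖ := by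
  classical
  rcases eq_or_ne (x j) 0 with hj | hj
  · simp [hj]
  have hsum : ∑ l, x l • v l = x j • (v j - -((x j)⁻¹ • ∑ l ∈ {j}ᶜ, x l • v l)) := by
    rw [Fintype.sum_eq_add_sum_compl j, sub_neg_eq_add, smul_add, smul_inv_smul₀ hj]
  have hmem : -((x j)⁻¹ • ∑ l ∈ {j}ᶜ, x l • v l) ∈ Submodule.span ℝ (v '' {j}ᶜ) :=
    neg_mem <| Submodule.smul_mem _ _ <| Submodule.sum_mem _ fun l hl =>
      Submodule.smul_mem _ _ <| Submodule.subset_span ⟨l, by simpa using hl, rfl⟩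
  rw [hsum, norm_smul, Real.norm_eq_abs, ← dist_eq_norm]
  exact mul_le_mul_of_nonneg_left (Metric.infDist_le_dist_of_mem hmem) (abs_nonneg _)

theorem isOpen_setOf_distSpanOthers_lt [Finite ι] (j : ι) (r : ℝ) :
    IsOpen {v : ι → E | distSpanOthers v j < r} := by
  classical
  have := Fintype.ofFinite ι
  have hunion : {v : ι → E | distSpanOthers v j < r} =
      ⋃ c : ({j}ᶜ : Set ι) → ℝ, {v | dist (v j) (∑ l, c l • v l) < r} := by
    ext v
    simp only [distSpanOthers, Metric.infDist_lt_iff (Submodule.nonempty _), Set.mem_ofPred_eq,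
      Set.mem_iUnion, SetLike.mem_coe, Fintype.mem_span_image_iff_exists_fun,
      exists_exists_eq_and]
  rw [hunion]
  exact isOpen_iUnion fun c => isOpen_lt (by fun_prop) continuous_const

theorem span_image_compl_singleton_ne_top [Fintype ι] (v : ι → E) (j : ι)
    (hcard : Fintype.card ι ≤ Module.finrank ℝ E) : Submodule.span ℝ (v '' {j}ᶜ) ≠ ⊤ := by
  classical
  intro htop
  have hspan : Submodule.span ℝ (Set.range fun l : ({j}ᶜ : Set ι) => v l) = ⊤ := by
    rw [← Set.image_eq_range, htop]
  have hlt : Fintype.card ({j}ᶜ : Set ι) < Fintype.card ι :=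
    Fintype.card_subtype_lt (x := j) (by simp)
  exact (finrank_le_of_span_eq_top hspan).not_gt (hlt.trans_le hcard)

end Distance

section SmallestSingularValue

theorem exists_one_le_card_mul_abs {ι : Type*} [Fintype ι] {x : EuclideanSpace ℝ ι}
    (hx : ‖x‖ = 1) : ∃ j, 1 ≤ Fintype.card ι * |x j| := by
  have : Nonempty ι := by
    by_contra! hempty
    simp [Subsingleton.elim x 0] at hx
  obtain ⟨j, hj⟩ := Finite.exists_max fun l => |x l|
  refine ⟨j, (sq_le_sq₀ zero_le_one (by positivity)).1 ?_⟩
  calc (1 : ℝ) ^ 2 = ∑ l, |x l| ^ 2 := by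
        simp only [← hx, EuclideanSpace.real_norm_sq_eq, sq_abs]
    _ ≤ Fintype.card ι * |x j| ^ 2 := by
        rw [← nsmul_eq_mul]
        exact Finset.sum_le_card_nsmul _ _ _ fun l _ => pow_le_pow_left₀ (abs_nonneg _) (hj l) 2
    _ ≤ (Fintype.card ι * |x j|) ^ 2 := by
        rw [mul_pow]
        gcongr
        exact le_self_pow₀ (by exact_mod_cast Fintype.card_pos) two_ne_zero

variable {d : ℕ}

theorem exists_norm_mulVec_lt_of_sigmaMin_lt (hd : 0 < d) {M : Matrix (Fin d) (Fin d) ℝ} {ε : ℝ}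
    (h : sigmaMin M < ε) :
    ∃ x : EuclideanSpace ℝ (Fin d), ‖x‖ = 1 ∧ ‖WithLp.toLp 2 (M *ᵥ x)‖ < ε := by
  have hunit : ‖EuclideanSpace.single (⟨0, hd⟩ : Fin d) (1 : ℝ)‖ = 1 := by simp
  obtain ⟨_, ⟨x, hx, rfl⟩, hlt⟩ := exists_lt_of_csInf_lt (by exact ⟨_, _, hunit, rfl⟩) h
  exact ⟨x, hx, hlt⟩

theorem exists_distSpanOthers_lt_of_sigmaMin_lt (hd : 0 < d) {M : Matrix (Fin d) (Fin d) ℝ}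
    {ε : ℝ} (h : sigmaMin M < ε) : ∃ j, distSpanOthers Mᵀ j < d * ε := by
  obtain ⟨x, hx, hlt⟩ := exists_norm_mulVec_lt_of_sigmaMin_lt hd h
  obtain ⟨j, hj⟩ := exists_one_le_card_mul_abs hx
  rw [Fintype.card_fin] at hj
  refine ⟨j, ?_⟩
  calc distSpanOthers Mᵀ j ≤ d * |x j| * distSpanOthers Mᵀ j :=
        le_mul_of_one_le_left Metric.infDist_nonneg hj
    _ = d * (|x j| * distSpanOthers Mᵀ j) := mul_assoc _ _ _
    _ ≤ d * ‖∑ l, x l • Mᵀ l‖ := by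
        gcongr
        exact abs_mul_distSpanOthers_le_norm_sum _ _ _
    _ = d * ‖M *ᵥ x‖ := by
        simp only [Matrix.mulVec_eq_sum, op_smul_eq_smul]
    _ ≤ d * ‖WithLp.toLp 2 (M *ᵥ x)‖ := by
        gcongr
        exact (pi_norm_le_iff_of_nonneg (norm_nonneg _)).2 fun i =>
          PiLp.norm_apply_le (WithLp.toLp 2 (M *ᵥ x)) i
    _ < d * ε := by gcongr

end SmallestSingularValue

section ProductMeasure

theorem pi_le_of_forall_update_le {ι : Type*} [Fintype ι] [DecidableEq ι] {X : ι → Type*}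
    [∀ i, MeasurableSpace (X i)] (μ : ∀ i, Measure (X i)) [∀ i, IsProbabilityMeasure (μ i)]
    (i : ι) {s : Set (∀ i, X i)} (hs : MeasurableSet s) {c : ℝ≥0∞}
    (h : ∀ x, μ i {y | Function.update x i y ∈ s} ≤ c) : Measure.pi μ s ≤ c := by
  have hmarginal : ∫⋯∫⁻_{i}, s.indicator 1 ∂μ ≤ ∫⋯∫⁻_{i}, (fun _ => c) ∂μ := fun x => by
    have hslice : MeasurableSet {y | Function.update x i y ∈ s} :=
      hs.preimage (measurable_update x)
    simp only [lmarginal_singleton, lintegral_const, measure_univ, mul_one]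
    exact (lintegral_indicator_one hslice).trans_le (h x)
  calc Measure.pi μ s = ∫⁻ x, s.indicator 1 x ∂Measure.pi μ := (lintegral_indicator_one hs).symm
    _ ≤ ∫⁻ _, c ∂Measure.pi μ := lintegral_le_of_lmarginal_le {i}
        (measurable_one.indicator hs) measurable_const hmarginal
    _ = c := by simp

theorem measurePreserving_swap_pi {ι κ X : Type*} [Fintype ι] [Fintype κ] [MeasurableSpace X]
    (μ : ι → κ → Measure X) [∀ i j, IsProbabilityMeasure (μ i j)] :
    MeasurePreserving (fun A j i => A i j) (Measure.pi fun i => Measure.pi (μ i))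
      (Measure.pi fun j => Measure.pi fun i => μ i j) := by
  have huncurry : MeasurePreserving (MeasurableEquiv.curry ι κ X).symm
      (Measure.infinitePi fun i => Measure.infinitePi (μ i))
      (Measure.infinitePi fun p : ι × κ => μ p.1 p.2) :=
    ⟨by fun_prop, Measure.infinitePi_map_curry_symm μ⟩
  have hswap : MeasurePreserving
      (MeasurableEquiv.piCongrLeft (fun _ : κ × ι => X) (Equiv.prodComm ι κ))
      (Measure.infinitePi fun p : ι × κ => μ p.1 p.2)
      (Measure.infinitePi fun p : κ × ι => μ p.2 p.1) :=
    ⟨by fun_prop, Measure.infinitePi_map_piCongrLeft (X := fun _ => X)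
      (fun p : κ × ι => μ p.2 p.1) (Equiv.prodComm ι κ)⟩
  have hcurry : MeasurePreserving (MeasurableEquiv.curry κ ι X)
      (Measure.infinitePi fun p : κ × ι => μ p.2 p.1)
      (Measure.infinitePi fun j => Measure.infinitePi fun i => μ i j) :=
    ⟨by fun_prop, Measure.infinitePi_map_curry fun j i => μ i j⟩
  simp only [← Measure.infinitePi_eq_pi]
  exact hcurry.comp (hswap.comp huncurry)

end ProductMeasure

section SmallBall

variable {ι : Type*} [Fintype ι] {K : ℝ≥0}

theorem pi_abs_dotProduct_lt_le {μ : ι → Measure ℝ} [∀ i, IsProbabilityMeasure (μ i)]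
    {u : ι → ℝ} {k : ι} (hμ : μ k ≤ K • volume) (hu : u k ≠ 0) (δ : ℝ) :
    Measure.pi μ {v | |u ⬝ᵥ v| < δ} ≤ ENNReal.ofReal (2 * K * (δ / |u k|)) := by
  classical
  refine pi_le_of_forall_update_le μ k
    (isOpen_lt (by fun_prop) continuous_const).measurableSet fun v => ?_
  set a : ℝ := v k - u ⬝ᵥ v / u k
  have hslice : {t | Function.update v k t ∈ {v | |u ⬝ᵥ v| < δ}} = Metric.ball a (δ / |u k|) := by
    ext t
    have hdot : u ⬝ᵥ Function.update v k t = (t - a) * u k := by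
      have hupdate : Function.update v k t = v + Pi.single k (t - v k) := by
        rw [Pi.update_eq_sub_add_single, Pi.single_sub]
        abel
      rw [hupdate, dotProduct_add, dotProduct_single]
      simp only [a]
      field_simp
      ring
    rw [Set.mem_ofPred_eq, Set.mem_ofPred_eq, hdot, abs_mul, Metric.mem_ball, Real.dist_eq,
      lt_div_iff₀ (abs_pos.2 hu)]
  rw [hslice]
  calc μ k (Metric.ball a (δ / |u k|)) ≤ (K • volume) (Metric.ball a (δ / |u k|)) := hμ _
    _ = ENNReal.ofReal (2 * K * (δ / |u k|)) := by
      rw [Measure.smul_apply, Real.volume_ball, ENNReal.smul_def, smul_eq_mul,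
        ← ENNReal.ofReal_coe_nnreal, ← ENNReal.ofReal_mul K.coe_nonneg, mul_left_comm, mul_assoc]

theorem exists_dotProduct_eq_zero_of_ne_top {W : Submodule ℝ (ι → ℝ)} (hW : W ≠ ⊤) :
    ∃ u : ι → ℝ, u ≠ 0 ∧ ∀ w ∈ W, u ⬝ᵥ w = 0 := by
  classical
  obtain ⟨f, hf, hWf⟩ := W.exists_le_ker_of_lt_top hW.lt_top
  obtain ⟨u, rfl⟩ := (dotProductEquiv ℝ ι).surjective f
  exact ⟨u, fun hu => hf (by rw [hu, map_zero]), fun w hw => hWf hw⟩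

theorem abs_dotProduct_le_card_mul (u w : ι → ℝ) :
    |u ⬝ᵥ w| ≤ Fintype.card ι * (‖u‖ * ‖w‖) := by
  rw [← nsmul_eq_mul]
  refine (Finset.abs_sum_le_sum_abs _ _).trans (Finset.sum_le_card_nsmul _ _ _ fun i _ => ?_)
  rw [abs_mul]
  exact mul_le_mul (norm_le_pi_norm u i) (norm_le_pi_norm w i) (abs_nonneg _) (norm_nonneg _)

theorem pi_infDist_lt_le {μ : ι → Measure ℝ} [∀ i, IsProbabilityMeasure (μ i)]
    (hμ : ∀ i, μ i ≤ K • volume) {W : Submodule ℝ (ι → ℝ)} (hW : W ≠ ⊤) (r : ℝ) :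
    Measure.pi μ {v | Metric.infDist v W < r} ≤ ENNReal.ofReal (2 * K * (Fintype.card ι * r)) := by
  obtain ⟨u, hu, hWu⟩ := exists_dotProduct_eq_zero_of_ne_top hW
  obtain ⟨i, -⟩ := Function.ne_iff.1 hu
  have : Nonempty ι := ⟨i⟩
  obtain ⟨k, hk⟩ := Finite.exists_max fun i => |u i|
  have hnorm : ‖u‖ = |u k| :=
    le_antisymm ((pi_norm_le_iff_of_nonempty u).2 hk) (norm_le_pi_norm u k)
  have hpos : 0 < |u k| := hnorm ▸ norm_pos_iff.2 hu
  have hsub : {v | Metric.infDist v W < r} ⊆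
      {v | |u ⬝ᵥ v| < Fintype.card ι * (|u k| * r)} := by
    intro v hv
    obtain ⟨w, hw, hvw⟩ := (Metric.infDist_lt_iff W.nonempty).1 hv
    calc |u ⬝ᵥ v| = |u ⬝ᵥ (v - w)| := by rw [dotProduct_sub, hWu w hw, sub_zero]
      _ ≤ Fintype.card ι * (|u k| * ‖v - w‖) := hnorm ▸ abs_dotProduct_le_card_mul _ _
      _ < Fintype.card ι * (|u k| * r) := by
        rw [← dist_eq_norm]
        gcongr
  refine (measure_mono hsub).trans
    ((pi_abs_dotProduct_lt_le (hμ k) (abs_pos.1 hpos) _).trans_eq ?_)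
  rw [mul_left_comm, mul_div_cancel_left₀ _ hpos.ne']

end SmallBall

section RandomMatrix

variable {ι κ η : Type*} [Fintype ι] [Fintype κ] [Fintype η] {K : ℝ≥0}

theorem pi_distSpanOthers_lt_le {μ : ι → κ → Measure ℝ} [∀ i j, IsProbabilityMeasure (μ i j)]
    (hμ : ∀ i j, μ i j ≤ K • volume) {s : η → κ} (hs : Function.Injective s)
    (hcard : Fintype.card η ≤ Fintype.card ι) (j : η) (r : ℝ) :
    (Measure.pi fun i => Measure.pi (μ i))
        {A | distSpanOthers (fun l i => A i (s l)) j < r} ≤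
      ENNReal.ofReal (2 * K * (Fintype.card ι * r)) := by
  classical
  have hopen : IsOpen {C : κ → ι → ℝ | distSpanOthers (C ∘ s) j < r} :=
    (isOpen_setOf_distSpanOthers_lt j r).preimage (by fun_prop)
  refine ((measurePreserving_swap_pi μ).measure_preimage
    hopen.measurableSet.nullMeasurableSet).trans_le ?_
  refine pi_le_of_forall_update_le _ (s j) hopen.measurableSet fun C => ?_
  simp only [Set.mem_ofPred_eq, Function.update_comp_eq_of_injective _ hs,
    distSpanOthers_update_self]
  exact pi_infDist_lt_le (fun i => hμ i (s j))
    (span_image_compl_singleton_ne_top _ j (by simpa using hcard)) r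

variable {d : ℕ}

theorem pi_sigmaMin_lt_le (hd : 0 < d) {μ : Fin d → κ → Measure ℝ}
    [∀ i j, IsProbabilityMeasure (μ i j)] (hμ : ∀ i j, μ i j ≤ K • volume) {s : Fin d → κ}
    (hs : Function.Injective s) (ε : ℝ) :
    (Measure.pi fun i => Measure.pi (μ i))
        {A | sigmaMin (Matrix.of fun i j => A i (s j)) < ε} ≤
      ENNReal.ofReal (2 * K * d ^ 3 * ε) := by
  have hsub : {A : Fin d → κ → ℝ | sigmaMin (Matrix.of fun i j => A i (s j)) < ε} ⊆
      ⋃ j, {A | distSpanOthers (fun l i => A i (s l)) j < d * ε} := fun A hA =>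
    Set.mem_iUnion.2 (exists_distSpanOthers_lt_of_sigmaMin_lt hd hA)
  refine (measure_mono hsub).trans ((measure_iUnion_fintype_le _ _).trans ?_)
  refine (Finset.sum_le_card_nsmul _ _ _ fun j _ =>
    pi_distSpanOthers_lt_le hμ hs le_rfl j (d * ε)).trans_eq ?_
  rw [← ENNReal.ofReal_nsmul, Finset.card_univ, Fintype.card_fin, nsmul_eq_mul]
  congr 1
  ring

theorem pi_exists_sigmaMin_lt_le {n : ℕ} (hd : 0 < d) {μ : Fin d → Fin n → Measure ℝ}
    [∀ i j, IsProbabilityMeasure (μ i j)] (hμ : ∀ i j, μ i j ≤ K • volume) (ε : ℝ) :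
    (Measure.pi fun i => Measure.pi (μ i))
        {A | ∃ S : Finset (Fin n), ∃ hS : S.card = d,
          sigmaMin (Matrix.of fun i j => A i (S.orderEmbOfFin hS j)) < ε} ≤
      ENNReal.ofReal (n.choose d * (2 * K * d ^ 3 * ε)) := by
  have hunion : {A : Fin d → Fin n → ℝ | ∃ S : Finset (Fin n), ∃ hS : S.card = d,
        sigmaMin (Matrix.of fun i j => A i (S.orderEmbOfFin hS j)) < ε} =
      ⋃ S : {S : Finset (Fin n) // S.card = d},
        {A | sigmaMin (Matrix.of fun i j => A i (S.1.orderEmbOfFin S.2 j)) < ε} := by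
    ext A
    simp only [Set.mem_ofPred_eq, Set.mem_iUnion, Subtype.exists]
  rw [hunion]
  refine (measure_iUnion_fintype_le _ _).trans ?_
  refine (Finset.sum_le_card_nsmul _ _ _ fun S _ =>
    pi_sigmaMin_lt_le hd hμ (S.1.orderEmbOfFin S.2).injective ε).trans_eq ?_
  rw [← ENNReal.ofReal_nsmul, Finset.card_univ, Fintype.card_finset_len, Fintype.card_fin,
    nsmul_eq_mul]

end RandomMatrix

theorem ofReal_one_sub_le_of_compl_le {Ω : Type*} [MeasurableSpace Ω] {P : Measure Ω}
    [IsProbabilityMeasure P] {s : Set Ω} {δ : ℝ} (hδ : 0 ≤ δ) (h : P sᶜ ≤ ENNReal.ofReal δ) :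
    ENNReal.ofReal (1 - δ) ≤ P s := by
  rw [ENNReal.ofReal_sub _ hδ, ENNReal.ofReal_one, tsub_le_iff_right]
  calc 1 = P Set.univ := measure_univ.symm
    _ ≤ P s + P sᶜ := measure_univ_le_add_compl s
    _ ≤ P s + ENNReal.ofReal δ := by gcongr

theorem choose_mul_cube_le_pow {κ m n : ℕ} (hm : m ≠ 0) (hn : n ≤ κ * m) {K : ℝ}
    (hK : 0 ≤ K) :
    (n.choose (m + 1) : ℝ) * (2 * K * (m + 1) ^ 3) ≤ (16 * 2 ^ κ * (K + 1)) ^ m := by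
  have hchoose : (n.choose (m + 1) : ℝ) ≤ (2 ^ κ) ^ m := by
    rw [← pow_mul]
    exact_mod_cast (Nat.choose_le_two_pow _ _).trans (Nat.pow_le_pow_right two_pos hn)
  have htwo : (2 : ℝ) ≤ 2 ^ m := le_self_pow₀ one_le_two hm
  have hKpow : K ≤ (K + 1) ^ m :=
    (le_add_of_nonneg_right zero_le_one).trans (le_self_pow₀ (by linarith) hm)
  have hdim : (m + 1 : ℝ) ≤ 2 ^ m := by exact_mod_cast Nat.lt_two_pow_self (n := m)
  calc (n.choose (m + 1) : ℝ) * (2 * K * (m + 1) ^ 3)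
      ≤ (2 ^ κ) ^ m * (2 ^ m * (K + 1) ^ m * (2 ^ m) ^ 3) := by gcongr
    _ = (16 * 2 ^ κ * (K + 1)) ^ m := by
      rw [pow_right_comm (2 : ℝ) m 3, ← mul_pow, ← mul_pow, ← mul_pow]
      congr 1
      ring

theorem gaussianReal_zero_one_le_volume : gaussianReal 0 1 ≤ volume := by
  have hsqrt : 1 ≤ √(2 * Real.pi) := Real.one_le_sqrt.2 (by linarith [Real.pi_gt_three])
  have hpdf : ∀ x, gaussianPDF 0 1 x ≤ 1 := fun x => by
    refine ENNReal.ofReal_le_one.2 (mul_le_one₀ ?_ (Real.exp_nonneg _) (Real.exp_le_one_iff.2 ?_))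
    · simpa using inv_le_one_of_one_le₀ hsqrt
    · exact div_nonpos_of_nonpos_of_nonneg (neg_nonpos.2 (sq_nonneg _)) (by simp)
  rw [gaussianReal_of_var_ne_zero _ one_ne_zero]
  calc volume.withDensity (gaussianPDF 0 1) ≤ volume.withDensity 1 :=
        withDensity_mono (Filter.Eventually.of_forall hpdf)
    _ = volume := withDensity_one

theorem stmt1_general (K : ℝ≥0) (C₀ : ℝ) :
    ∃ C₁ C₂ : ℝ, 1 < C₁ ∧ 0 < C₂ ∧ C₂ < 1 ∧
      ∀ d n : ℕ, 2 ≤ d → (n : ℝ) / ((d : ℝ) - 1) ≤ C₀ →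
        ∀ μ : Fin d → Fin n → Measure ℝ, (∀ i j, IsProbabilityMeasure (μ i j)) →
          (∀ i j, μ i j ≤ K • volume) →
          ENNReal.ofReal (1 - C₂ ^ (d - 1)) ≤
            (Measure.pi fun i => Measure.pi (μ i))
              {A : Fin d → Fin n → ℝ | ∀ S : Finset (Fin n), ∀ hS : S.card = d,
                1 / C₁ ^ (d - 1) ≤
                  sigmaMin (Matrix.of fun i j => A i (S.orderEmbOfFin hS j))} := by
  set κ := ⌈C₀⌉₊
  set B : ℝ := 16 * 2 ^ κ * (K + 1)
  have hB : 1 ≤ B := by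
    have h2 : (1 : ℝ) ≤ 2 ^ κ := one_le_pow₀ one_le_two
    nlinarith [K.coe_nonneg]
  refine ⟨2 * B, 1 / 2, by linarith, by norm_num, by norm_num, fun d n hd hn μ _ hμ => ?_⟩
  obtain ⟨m, rfl⟩ : ∃ m, d = m + 1 := ⟨d - 1, by omega⟩
  have hm : m ≠ 0 := by omega
  rw [Nat.cast_succ, add_sub_cancel_right, div_le_iff₀ (by positivity)] at hn
  have hnκ : n ≤ κ * m := by
    exact_mod_cast hn.trans (mul_le_mul_of_nonneg_right (Nat.le_ceil C₀) m.cast_nonneg)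
  refine ofReal_one_sub_le_of_compl_le (by positivity) ?_
  simp only [Set.compl_ofPred, not_forall, not_le]
  refine (pi_exists_sigmaMin_lt_le m.succ_pos hμ _).trans ?_
  refine ENNReal.ofReal_le_ofReal ?_
  calc (n.choose (m + 1) : ℝ) * (2 * K * (m + 1 : ℕ) ^ 3 * (1 / (2 * B) ^ (m + 1 - 1)))
      = n.choose (m + 1) * (2 * K * (m + 1) ^ 3) / (2 * B) ^ m := by
        rw [Nat.add_sub_cancel, Nat.cast_succ]
        ring
    _ ≤ B ^ m / (2 * B) ^ m := by
        gcongr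
        exact choose_mul_cube_le_pow hm hnκ K.coe_nonneg
    _ = (1 / 2) ^ m := by
        rw [← div_pow, div_mul_cancel_right₀ (by positivity), one_div]

/-- Theorem: for a `d`-by-`n` matrix with iid standard Gaussian entries, `d ≥ 2` and
`1 < n/(d-1) ≤ C₀`, there are constants `C₁ > 1` and `0 < C₂ < 1` (depending only on `C₀`)
such that with probability at least `1 - n C₂ ^ (d-1)`, every `d`-by-`d` column submatrix
has smallest singular value at least `1/C₁ ^ (d-1)`. -/
theorem stmt1 (C₀ : ℝ) :
    ∃ C₁ C₂ : ℝ, 1 < C₁ ∧ 0 < C₂ ∧ C₂ < 1 ∧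
      ∀ d n : ℕ, 2 ≤ d → 1 < (n : ℝ) / ((d : ℝ) - 1) → (n : ℝ) / ((d : ℝ) - 1) ≤ C₀ →
        ENNReal.ofReal (1 - (n : ℝ) * C₂ ^ (d - 1)) ≤
          (Measure.pi fun _ : Fin d => Measure.pi fun _ : Fin n => gaussianReal 0 1)
            {A : Fin d → Fin n → ℝ | ∀ S : Finset (Fin n), ∀ hS : S.card = d,
              1 / C₁ ^ (d - 1) ≤
                sigmaMin (Matrix.of fun i j => A i (S.orderEmbOfFin hS j))} := by
  obtain ⟨C₁, C₂, hC₁, hC₂, hC₂', h⟩ := stmt1_general 1 C₀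
  refine ⟨C₁, C₂, hC₁, hC₂, hC₂', fun d n hd hn hnC => le_trans ?_ <|
    h d n hd hnC (fun _ _ => gaussianReal 0 1) (fun _ _ => inferInstance)
      fun _ _ => by simpa using gaussianReal_zero_one_le_volume⟩
  have hn0 : (1 : ℝ) ≤ n := by
    rcases n.eq_zero_or_pos with rfl | hpos
    · norm_num at hn
    · exact_mod_cast hpos
  gcongr
  exact le_mul_of_one_le_left (by positivity) hn0
end

section
/- Let A(n,t,w) denote the maximum number of binary vectors of length n with exactly w ones whose pairwise Hamming distance is at least t. Then for every c₀ > 1 there exist constants c₁ > 0 and c₂ > 1, depending only on c₀, such that for all d ≥ 1 and all n with n/d ≥ c₀ one has A(n, c₁·d, d) ≥ c₂^d. -/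
/-!
Write `k = min d (n - d)`, which is at least a fixed proportion of `d`. A maximal family of subsets
of a `k`-element set at pairwise distance more than `k / 8` has at least `(4 / 3) ^ k` members:
the balls of radius `k / 8` around them cover the cube, and a Chernoff bound makes these balls
exponentially small. Sending `U` to `U ⊔ Uᶜ ⊔ R`, where `R` is a fixed set of `d - k` further
points, turns the family into one of `d`-element subsets of an `n`-element set and doubles all
distances.
-/

section

open Finset
open scoped symmDiff SetRel

section Covering

variable {α : Type*} [Fintype α]

lemma card_le_card_mul_of_isCover_univ {U : SetRel α α} [DecidableRel fun x y ↦ x ~[U] y]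
    {C : Finset α} (hC : SetRel.IsCover U Set.univ C) {V : ℕ}
    (hV : ∀ y ∈ C, #{x | x ~[U] y} ≤ V) : Fintype.card α ≤ #C * V := by
  classical
  have hcover : (univ : Finset α) = C.biUnion fun y ↦ {x | x ~[U] y} := by
    ext x
    simpa using hC (Set.mem_univ x)
  rw [← card_univ, hcover]
  exact card_biUnion_le_card_mul _ _ _ hV

lemma exists_isSeparated_card_le_card_mul (U : SetRel α α) [U.IsRefl] [U.IsSymm]
    [DecidableRel fun x y ↦ x ~[U] y] {V : ℕ} (hV : ∀ y, #{x | x ~[U] y} ≤ V) :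
    ∃ C : Finset α, U.IsSeparated C ∧ Fintype.card α ≤ #C * V := by
  obtain ⟨N, -, hN⟩ := Finite.exists_le_maximal
    (p := fun N : Set α ↦ N ⊆ Set.univ ∧ U.IsSeparated N) ⟨Set.empty_subset _, .empty⟩
  lift N to Finset α using N.toFinite
  exact ⟨N, hN.prop.2,
    card_le_card_mul_of_isCover_univ (.of_maximal_isSeparated hN) fun y _ ↦ hV y⟩

end Covering

section HammingCube

variable {ι : Type*}

lemma card_filter_card_le_mul_pow_le [Fintype ι] {R : Type*} [CommSemiring R] [PartialOrder R]
    [IsOrderedRing R] (r : ℕ) {x : R} (hx₀ : 0 ≤ x) (hx₁ : x ≤ 1) :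
    (#{S : Finset ι | #S ≤ r} : R) * x ^ r ≤ (1 + x) ^ Fintype.card ι := by
  calc (#{S : Finset ι | #S ≤ r} : R) * x ^ r
      = ∑ S : Finset ι with #S ≤ r, x ^ r := by rw [sum_const, nsmul_eq_mul]
    _ ≤ ∑ S : Finset ι with #S ≤ r, x ^ #S :=
      sum_le_sum fun S hS ↦ pow_le_pow_of_le_one hx₀ hx₁ (mem_filter_univ S |>.1 hS)
    _ ≤ ∑ S : Finset ι, x ^ #S :=
      sum_le_sum_of_subset_of_nonneg (subset_univ _) fun S _ _ ↦ pow_nonneg hx₀ #S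
    _ = (1 + x) ^ Fintype.card ι := by
      simpa [add_comm] using Fintype.sum_pow_mul_eq_add_pow ι x 1

variable [DecidableEq ι]

variable (ι) in
/-- The relation "at Hamming distance at most `r`" on binary vectors, a vector being encoded by its
support; being separated for it means having pairwise distances at least `r + 1`. -/
def hammingEntourage (r : ℕ) : SetRel (Finset ι) (Finset ι) :=
  {p | #(p.1 ∆ p.2) ≤ r}

lemma mem_hammingEntourage {r : ℕ} {S T : Finset ι} :
    S ~[hammingEntourage ι r] T ↔ #(S ∆ T) ≤ r := Iff.rfl

instance (r : ℕ) : (hammingEntourage ι r).IsRefl where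
  refl S := by simp [mem_hammingEntourage]

instance (r : ℕ) : (hammingEntourage ι r).IsSymm where
  symm S T h := by rwa [mem_hammingEntourage, symmDiff_comm]

instance (r : ℕ) : DecidableRel fun S T ↦ S ~[hammingEntourage ι r] T :=
  fun _ _ ↦ decidable_of_iff _ mem_hammingEntourage.symm

variable [Fintype ι]

lemma card_filter_hammingEntourage_le (r : ℕ) (T : Finset ι) :
    #{S | S ~[hammingEntourage ι r] T} ≤ #{S : Finset ι | #S ≤ r} :=
  card_le_card_of_injOn (· ∆ T) (fun S hS ↦ by simpa [mem_hammingEntourage] using hS)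
    (symmDiff_left_injective T).injOn

lemma exists_isSeparated_two_pow_mul_pow_le {R : Type*} [CommSemiring R] [PartialOrder R]
    [IsOrderedRing R] (r : ℕ) {x : R} (hx₀ : 0 ≤ x) (hx₁ : x ≤ 1) :
    ∃ C : Finset (Finset ι), (hammingEntourage ι r).IsSeparated C ∧
      2 ^ Fintype.card ι * x ^ r ≤ (#C : R) * (1 + x) ^ Fintype.card ι := by
  obtain ⟨C, hsep, hcard⟩ :=
    exists_isSeparated_card_le_card_mul (hammingEntourage ι r) (card_filter_hammingEntourage_le r)
  refine ⟨C, hsep, ?_⟩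
  have hcard' : (2 : R) ^ Fintype.card ι ≤ #C * #{S : Finset ι | #S ≤ r} := by
    simpa using Nat.mono_cast (α := R) hcard
  calc (2 : R) ^ Fintype.card ι * x ^ r
      ≤ #C * #{S : Finset ι | #S ≤ r} * x ^ r := by gcongr
    _ = #C * (#{S : Finset ι | #S ≤ r} * x ^ r) := mul_assoc _ _ _
    _ ≤ #C * (1 + x) ^ Fintype.card ι := by
      gcongr
      exact card_filter_card_le_mul_pow_le r hx₀ hx₁

variable (ι) in
lemma exists_isSeparated_four_thirds_pow_le :
    ∃ C : Finset (Finset ι), (hammingEntourage ι (Fintype.card ι / 8)).IsSeparated C ∧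
      (4 / 3 : ℝ) ^ Fintype.card ι ≤ #C := by
  set k := Fintype.card ι
  -- With `y = 3 / 4`, the Chernoff bound at `x = y ^ 8` gives the rate `2 * y / (1 + y ^ 8)`.
  obtain ⟨C, hsep, hcard⟩ := exists_isSeparated_two_pow_mul_pow_le (ι := ι) (k / 8)
    (x := (3 / 4 : ℝ) ^ 8) (by positivity) (by norm_num)
  refine ⟨C, hsep, le_of_mul_le_mul_right ?_ (by positivity : 0 < (1 + (3 / 4 : ℝ) ^ 8) ^ k)⟩
  calc (4 / 3 : ℝ) ^ k * (1 + (3 / 4) ^ 8) ^ k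
      ≤ (2 * (3 / 4)) ^ k := by
        rw [← mul_pow]
        exact pow_le_pow_left₀ (by norm_num) (by norm_num) k
    _ = 2 ^ k * (3 / 4) ^ k := mul_pow _ _ _
    _ ≤ 2 ^ k * ((3 / 4) ^ 8) ^ (k / 8) := by
        rw [← pow_mul]
        gcongr 2 ^ k * ?_
        exact pow_le_pow_of_le_one (by norm_num) (by norm_num) (Nat.mul_div_le k 8)
    _ ≤ #C * (1 + (3 / 4) ^ 8) ^ k := hcard

end HammingCube

section ConstantWeight

variable {α β κ : Type*} [DecidableEq α] [DecidableEq β] [DecidableEq κ]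

lemma disjSum_symmDiff_disjSum (s s' : Finset α) (t t' : Finset β) :
    s.disjSum t ∆ s'.disjSum t' = (s ∆ s').disjSum (t ∆ t') := by
  ext (a | b) <;> simp [mem_symmDiff]

lemma card_map_symmDiff_map (e : α ↪ β) (s t : Finset α) : #(s.map e ∆ t.map e) = #(s ∆ t) := by
  rw [map_eq_image, map_eq_image, ← image_symmDiff s t e.injective,
    card_image_of_injective _ e.injective]

variable [Fintype κ] (ρ : Type*) [Fintype ρ]

/-- The set `U ⊔ Uᶜ ⊔ ρ`, whose size does not depend on `U`: it makes a family of sets of arbitrary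
sizes into a constant-weight one, the summand `ρ` being there to adjust the weight. -/
def balancedSum (U : Finset κ) : Finset (κ ⊕ κ ⊕ ρ) :=
  U.disjSum (Uᶜ.disjSum univ)

lemma card_balancedSum (U : Finset κ) : #(balancedSum ρ U) = Fintype.card κ + Fintype.card ρ := by
  simp only [balancedSum, card_disjSum, card_univ]
  rw [← add_assoc, card_add_card_compl]

lemma card_balancedSum_symmDiff_balancedSum [DecidableEq ρ] (U W : Finset κ) :
    #(balancedSum ρ U ∆ balancedSum ρ W) = 2 * #(U ∆ W) := by
  simp only [balancedSum, disjSum_symmDiff_disjSum, compl_symmDiff_compl, symmDiff_self,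
    card_disjSum, bot_eq_empty, card_empty]
  ring

lemma exists_constantWeight_isSeparated [Fintype α] {C : Finset (Finset κ)} {r d : ℕ}
    (hC : (hammingEntourage κ r).IsSeparated C) (hκd : Fintype.card κ ≤ d)
    (hdα : d + Fintype.card κ ≤ Fintype.card α) :
    ∃ 𝓕 : Finset (Finset α), (∀ S ∈ 𝓕, #S = d) ∧
      (hammingEntourage α (2 * r + 1)).IsSeparated 𝓕 ∧ #𝓕 = #C := by
  let ρ := Fin (d - Fintype.card κ)
  obtain ⟨e⟩ : Nonempty (κ ⊕ κ ⊕ ρ ↪ α) := by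
    apply Function.Embedding.nonempty_of_card_le
    simp only [ρ, Fintype.card_sum, Fintype.card_fin]
    omega
  let φ (U : Finset κ) : Finset α := (balancedSum ρ U).map e
  have card_φ (U : Finset κ) : #(φ U) = d := by
    simp [φ, ρ, card_balancedSum, hκd]
  have dist_φ (U W : Finset κ) : #(φ U ∆ φ W) = 2 * #(U ∆ W) := by
    rw [card_map_symmDiff_map, card_balancedSum_symmDiff_balancedSum]
  have φ_injective : φ.Injective := fun U W h ↦ by
    simpa [h] using dist_φ U W
  refine ⟨C.image φ, by simp [card_φ], ?_, card_image_of_injective _ φ_injective⟩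
  rw [SetRel.IsSeparated, coe_image, φ_injective.injOn.pairwise_image]
  refine hC.imp fun U W hUW ↦ ?_
  simp only [Function.onFun, mem_hammingEntourage, dist_φ] at hUW ⊢
  omega

end ConstantWeight

lemma min_one_sub_one_mul_le_min_sub {c : ℝ} {d n : ℕ} (h : c * d ≤ n) :
    min 1 (c - 1) * d ≤ (min d (n - d) : ℕ) := by
  rw [Nat.cast_min, min_mul_of_nonneg _ _ d.cast_nonneg, one_mul, sub_mul, one_mul]
  refine min_le_min_left _ ((sub_le_sub_right h _).trans ?_)
  rw [sub_le_iff_le_add]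
  exact_mod_cast le_tsub_add

end

/-- Lemma (Gilbert–Varshamov type bound): identifying binary vectors of length `n` with
exactly `w` ones with `w`-element subsets of `Fin n` (Hamming distance = cardinality of the
symmetric difference), for every `c₀ > 1` there exist constants `c₁ > 0` and `c₂ > 1`
(depending only on `c₀`) such that for all `d ≥ 1` and all `n` with `n/d ≥ c₀` there is a
family of `d`-element subsets of `Fin n`, of cardinality at least `c₂^d`, whose members have
pairwise Hamming distance at least `c₁ d`; that is, `A(n, c₁ d, d) ≥ c₂^d`. -/
theorem stmt13 (c₀ : ℝ) (hc₀ : 1 < c₀) :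
    ∃ c₁ c₂ : ℝ, 0 < c₁ ∧ 1 < c₂ ∧
      ∀ d n : ℕ, 1 ≤ d → c₀ ≤ (n : ℝ) / (d : ℝ) →
        ∃ 𝓕 : Finset (Finset (Fin n)),
          (∀ S ∈ 𝓕, S.card = d) ∧
          (∀ S ∈ 𝓕, ∀ T ∈ 𝓕, S ≠ T → c₁ * (d : ℝ) ≤ ((symmDiff S T).card : ℝ)) ∧
          c₂ ^ d ≤ (𝓕.card : ℝ) := by
  have hε : 0 < min 1 (c₀ - 1) := lt_min one_pos (sub_pos.2 hc₀)
  set ε := min 1 (c₀ - 1)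
  refine ⟨ε / 4, (4 / 3 : ℝ) ^ ε, by positivity, Real.one_lt_rpow (by norm_num) hε, ?_⟩
  intro d n hd hn
  have hcd : c₀ * d ≤ n := (le_div_iff₀ (by exact_mod_cast hd)).1 hn
  have hdn : d ≤ n := by
    exact_mod_cast (le_mul_of_one_le_left d.cast_nonneg hc₀.le).trans hcd
  obtain ⟨k, hk⟩ : ∃ k, k = min d (n - d) := ⟨_, rfl⟩
  have hεk : ε * d ≤ k := hk ▸ min_one_sub_one_mul_le_min_sub hcd
  obtain ⟨C, hC, hCcard⟩ := exists_isSeparated_four_thirds_pow_le (Fin k)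
  rw [Fintype.card_fin] at hC hCcard
  obtain ⟨𝓕, hweight, hsep, hcard⟩ := exists_constantWeight_isSeparated (α := Fin n) (d := d) hC
    (by rw [Fintype.card_fin]; omega) (by simp only [Fintype.card_fin]; omega)
  refine ⟨𝓕, hweight, fun S hS T hT hST ↦ ?_, ?_⟩
  · have hdist : 2 * (k / 8) + 1 < (symmDiff S T).card := not_le.1 (hsep hS hT hST)
    have hk_le : (k : ℝ) ≤ 4 * (symmDiff S T).card := by exact_mod_cast (by omega)
    linarith
  · calc ((4 / 3 : ℝ) ^ ε) ^ d = (4 / 3 : ℝ) ^ (ε * d) :=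
        (Real.rpow_mul_natCast (by norm_num) ..).symm
      _ ≤ (4 / 3 : ℝ) ^ (k : ℝ) := Real.rpow_le_rpow_of_exponent_le (by norm_num) hεk
      _ ≤ 𝓕.card := by rwa [Real.rpow_natCast, hcard]
end

section
/- Let μ ∈ ℝ and σ > 0. Let X₁, …, X_k be independent N(0,σ²) random variables and let Y₁, …, Y_k be independent N(μ,σ²) random variables. Then for every t, ℙ( Σ_{i=1}^{k} Xᵢ² ≥ t² ) ≤ ℙ( Σ_{i=1}^{k} Yᵢ² ≥ t² ). -/
open MeasureTheory ProbabilityTheory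

/-!
Among all measurable sets of a given volume, superlevel sets of a density carry the most mass, and
moving an interval away from the centre of a Gaussian only trades points of higher density for
points of lower density. Hence `ℙ(|X + m| < a)`, for `X` a centred Gaussian, decreases in `|m|`,
so that `(X + m)²` increases in the usual stochastic order as `|m|` grows. This order is preserved
by convolution, hence by sums of independent random variables.
-/

open Set
open scoped NNReal ENNReal

/-- The usual stochastic order on measures on the real line: `ν` gives at least as much mass as `μ`
to every closed upper half-line. For probability measures this is first-order stochastic
dominance of `μ` by `ν`. -/
def StochasticLE (μ ν : Measure ℝ) : Prop :=
  ∀ c, μ (Ici c) ≤ ν (Ici c)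

namespace StochasticLE

theorem refl (μ : Measure ℝ) : StochasticLE μ μ := fun _ ↦ le_rfl

theorem trans {μ ν ρ : Measure ℝ} (hμν : StochasticLE μ ν) (hνρ : StochasticLE ν ρ) :
    StochasticLE μ ρ :=
  fun c ↦ (hμν c).trans (hνρ c)

end StochasticLE

theorem stochasticLE_map_iff {Ω Ω' : Type*} [MeasurableSpace Ω] [MeasurableSpace Ω']
    {P : Measure Ω} {Q : Measure Ω'} {X : Ω → ℝ} {Y : Ω' → ℝ}
    (hX : AEMeasurable X P) (hY : AEMeasurable Y Q) :
    StochasticLE (P.map X) (Q.map Y) ↔ ∀ c, P {ω | c ≤ X ω} ≤ Q {ω | c ≤ Y ω} :=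
  forall_congr' fun c ↦ by
    rw [Measure.map_apply_of_aemeasurable hX measurableSet_Ici,
      Measure.map_apply_of_aemeasurable hY measurableSet_Ici]
    rfl

theorem conv_apply_Ici (μ ν : Measure ℝ) [SFinite ν] (c : ℝ) :
    (μ ∗ ν) (Ici c) = ∫⁻ x, ν (Ici (c - x)) ∂μ := by
  have hsum : Measurable fun p : ℝ × ℝ ↦ p.1 + p.2 := measurable_add
  rw [Measure.conv, Measure.map_apply hsum measurableSet_Ici,
    Measure.prod_apply (hsum measurableSet_Ici)]
  congr! with x
  ext y
  simp only [mem_preimage, mem_Ici, tsub_le_iff_left]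

namespace StochasticLE

theorem conv_left (μ : Measure ℝ) {ν ν' : Measure ℝ} [SFinite ν] [SFinite ν']
    (h : StochasticLE ν ν') : StochasticLE (μ ∗ ν) (μ ∗ ν') := fun c ↦ by
  rw [conv_apply_Ici, conv_apply_Ici]
  exact lintegral_mono fun x ↦ h (c - x)

theorem conv {μ μ' ν ν' : Measure ℝ} [SFinite μ] [SFinite μ'] [SFinite ν] [SFinite ν']
    (hμ : StochasticLE μ μ') (hν : StochasticLE ν ν') : StochasticLE (μ ∗ ν) (μ' ∗ ν') := by
  refine (hν.conv_left μ).trans ?_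
  rw [Measure.conv_comm μ, Measure.conv_comm μ']
  exact hμ.conv_left ν'

theorem map_finsetSum {Ω Ω' ι : Type*} [MeasurableSpace Ω] [MeasurableSpace Ω']
    {P : Measure Ω} {Q : Measure Ω'} {X : ι → Ω → ℝ} {Y : ι → Ω' → ℝ}
    (hX : iIndepFun X P) (hY : iIndepFun Y Q)
    (hXm : ∀ i, AEMeasurable (X i) P) (hYm : ∀ i, AEMeasurable (Y i) Q) (s : Finset ι)
    (h : ∀ i ∈ s, StochasticLE (P.map (X i)) (Q.map (Y i))) :
    StochasticLE (P.map (∑ i ∈ s, X i)) (Q.map (∑ i ∈ s, Y i)) := by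
  classical
  have := hX.isProbabilityMeasure
  have := hY.isProbabilityMeasure
  induction s using Finset.induction_on with
  | empty =>
    simp only [Finset.sum_empty, Pi.zero_def, Measure.map_const, measure_univ, one_smul]
    exact refl _
  | insert i s hi ih =>
    rw [Finset.sum_insert hi, Finset.sum_insert hi,
      (hX.indepFun_finsetSum_of_notMem₀ hXm hi).symm.map_add_eq_map_conv_map₀ (hXm i)
        (Finset.aemeasurable_sum s fun j _ ↦ hXm j),
      (hY.indepFun_finsetSum_of_notMem₀ hYm hi).symm.map_add_eq_map_conv_map₀ (hYm i)
        (Finset.aemeasurable_sum s fun j _ ↦ hYm j)]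
    exact (h i (Finset.mem_insert_self i s)).conv
      (ih fun j hj ↦ h j (Finset.mem_insert_of_mem hj))

end StochasticLE

theorem measure_pi_le_sum_mono {ι : Type*} [Fintype ι] {α : ι → Type*}
    [∀ i, MeasurableSpace (α i)] {μ ν : ∀ i, Measure (α i)}
    [∀ i, IsProbabilityMeasure (μ i)] [∀ i, IsProbabilityMeasure (ν i)] {f : ∀ i, α i → ℝ}
    (hf : ∀ i, Measurable (f i)) (h : ∀ i, StochasticLE ((μ i).map (f i)) ((ν i).map (f i)))
    (c : ℝ) :
    Measure.pi μ {x | c ≤ ∑ i, f i (x i)} ≤ Measure.pi ν {x | c ≤ ∑ i, f i (x i)} := by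
  have hm (i : ι) : Measurable fun x : ∀ i, α i ↦ f i (x i) :=
    (hf i).comp (measurable_pi_apply i)
  have map_coord (ρ : ∀ i, Measure (α i)) [∀ i, IsProbabilityMeasure (ρ i)] (i : ι) :
      (Measure.pi ρ).map (fun x ↦ f i (x i)) = (ρ i).map (f i) := by
    rw [← (measurePreserving_eval ρ i).map_eq, Measure.map_map (hf i) (measurable_pi_apply i)]
    rfl
  have hsum := StochasticLE.map_finsetSum
    (iIndepFun_pi (μ := μ) fun i ↦ (hf i).aemeasurable)
    (iIndepFun_pi (μ := ν) fun i ↦ (hf i).aemeasurable)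
    (fun i ↦ (hm i).aemeasurable) (fun i ↦ (hm i).aemeasurable) Finset.univ
    (fun i _ ↦ by rw [map_coord μ, map_coord ν]; exact h i)
  have hsum_meas : Measurable (∑ i, fun x : ∀ i, α i ↦ f i (x i)) := by fun_prop
  simpa only [Finset.sum_apply] using
    (stochasticLE_map_iff hsum_meas.aemeasurable hsum_meas.aemeasurable).1 hsum c

section Rearrangement

variable {α : Type*} [MeasurableSpace α] {μ : Measure α} {s t : Set α}

theorem measure_sdiff_le_measure_sdiff (hs : MeasurableSet s) (ht : MeasurableSet t)
    (hst : μ s ≤ μ t) (hfin : μ (s ∩ t) ≠ ∞) : μ (s \ t) ≤ μ (t \ s) := by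
  rw [← measure_inter_add_sdiff s ht, ← measure_inter_add_sdiff t hs, inter_comm t s] at hst
  exact (ENNReal.add_le_add_iff_left hfin).1 hst

theorem setLIntegral_le_setLIntegral_of_measure_le {f : α → ℝ≥0∞} {c : ℝ≥0∞}
    (hs : MeasurableSet s) (ht : MeasurableSet t) (hst : μ s ≤ μ t) (hfin : μ (s ∩ t) ≠ ∞)
    (hle : ∀ x ∈ s \ t, f x ≤ c) (hge : ∀ x ∈ t \ s, c ≤ f x) :
    ∫⁻ x in s, f x ∂μ ≤ ∫⁻ x in t, f x ∂μ := by
  have hdiff : ∫⁻ x in s \ t, f x ∂μ ≤ ∫⁻ x in t \ s, f x ∂μ :=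
    calc ∫⁻ x in s \ t, f x ∂μ
      _ ≤ ∫⁻ _ in s \ t, c ∂μ := setLIntegral_mono' (hs.diff ht) hle
      _ = c * μ (s \ t) := setLIntegral_const _ _
      _ ≤ c * μ (t \ s) := by gcongr c * ?_; exact measure_sdiff_le_measure_sdiff hs ht hst hfin
      _ = ∫⁻ _ in t \ s, c ∂μ := (setLIntegral_const _ _).symm
      _ ≤ ∫⁻ x in t \ s, f x ∂μ := setLIntegral_mono' (ht.diff hs) hge
  rw [← lintegral_inter_add_sdiff f s ht, ← lintegral_inter_add_sdiff f t hs, inter_comm t s]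
  gcongr

end Rearrangement

theorem gaussianPDF_le_gaussianPDF {m x y : ℝ} (v : ℝ≥0) (h : |x - m| ≤ |y - m|) :
    gaussianPDF m v y ≤ gaussianPDF m v x := by
  have hsq : (x - m) ^ 2 ≤ (y - m) ^ 2 := sq_le_sq.2 h
  simp only [gaussianPDF, gaussianPDFReal]
  gcongr

theorem gaussianReal_Ioo_neg_self (m : ℝ) (v : ℝ≥0) (a : ℝ) :
    gaussianReal m v (Ioo (-a) a) = gaussianReal 0 v (Ioo (m - a) (m + a)) := by
  rw [← sub_self m, ← gaussianReal_map_const_sub m,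
    Measure.map_apply (by fun_prop) measurableSet_Ioo, preimage_const_sub_Ioo]
  simp only [sub_add_cancel_left, sub_sub_cancel]

theorem gaussianReal_abs_Ioo_neg_self (m : ℝ) (v : ℝ≥0) (a : ℝ) :
    gaussianReal |m| v (Ioo (-a) a) = gaussianReal m v (Ioo (-a) a) := by
  obtain hm | hm := abs_choice m
  · rw [hm]
  · rw [hm, ← gaussianReal_map_neg, Measure.map_apply measurable_neg measurableSet_Ioo]
    simp only [neg_preimage, neg_Ioo, neg_neg]

theorem gaussianReal_zero_Ioo_anti {m m' : ℝ} (hm : 0 ≤ m) (hmm' : m ≤ m') {v : ℝ≥0}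
    (hv : v ≠ 0) (a : ℝ) :
    gaussianReal 0 v (Ioo (m' - a) (m' + a)) ≤ gaussianReal 0 v (Ioo (m - a) (m + a)) := by
  rw [gaussianReal_apply 0 hv, gaussianReal_apply 0 hv]
  have hvol : volume (Ioo (m' - a) (m' + a)) = volume (Ioo (m - a) (m + a)) := by
    simp only [Real.volume_Ioo, add_sub_sub_cancel]
  have hfin : volume (Ioo (m' - a) (m' + a) ∩ Ioo (m - a) (m + a)) ≠ ∞ :=
    measure_ne_top_of_subset inter_subset_left measure_Ioo_lt_top.ne
  -- The right endpoint `m + a` separates the two differences: `|x| ≤ m + a` on the interval around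
  -- `m`, whereas the points of the other interval outside it lie to the right of `m + a`.
  refine setLIntegral_le_setLIntegral_of_measure_le (c := gaussianPDF 0 v (m + a))
    measurableSet_Ioo measurableSet_Ioo hvol.le hfin ?_ ?_
  · rintro x ⟨⟨hx, hx'⟩, hxm⟩
    have hright : m + a ≤ x := not_lt.1 fun hlt ↦ hxm ⟨by linarith, hlt⟩
    apply gaussianPDF_le_gaussianPDF
    rw [sub_zero, sub_zero, abs_of_nonneg (by linarith : 0 ≤ m + a)]
    exact hright.trans (le_abs_self x)
  · rintro x ⟨⟨hx, hx'⟩, -⟩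
    apply gaussianPDF_le_gaussianPDF
    rw [sub_zero, sub_zero, abs_of_nonneg (by linarith : 0 ≤ m + a)]
    exact abs_le.2 ⟨by linarith, hx'.le⟩

theorem gaussianReal_Ioo_neg_self_anti {m m' : ℝ} (h : |m| ≤ |m'|) (v : ℝ≥0) (a : ℝ) :
    gaussianReal m' v (Ioo (-a) a) ≤ gaussianReal m v (Ioo (-a) a) := by
  obtain rfl | hv := eq_or_ne v 0
  · rw [gaussianReal_zero_var, gaussianReal_zero_var, Measure.dirac_apply' _ measurableSet_Ioo,
      Measure.dirac_apply' _ measurableSet_Ioo]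
    by_cases hm' : m' ∈ Ioo (-a) a
    · have hm : m ∈ Ioo (-a) a := abs_lt.1 (h.trans_lt (abs_lt.2 hm'))
      rw [indicator_of_mem hm', indicator_of_mem hm, Pi.one_apply, Pi.one_apply]
    · rw [indicator_of_notMem hm']
      exact zero_le
  · rw [← gaussianReal_abs_Ioo_neg_self m', ← gaussianReal_abs_Ioo_neg_self m,
      gaussianReal_Ioo_neg_self, gaussianReal_Ioo_neg_self]
    exact gaussianReal_zero_Ioo_anti (abs_nonneg m) h hv a

theorem stochasticLE_map_sq_gaussianReal {m m' : ℝ} (h : |m| ≤ |m'|) (v : ℝ≥0) :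
    StochasticLE ((gaussianReal m v).map (· ^ 2)) ((gaussianReal m' v).map (· ^ 2)) := by
  have hsq : Measurable fun x : ℝ ↦ x ^ 2 := by fun_prop
  refine (stochasticLE_map_iff hsq.aemeasurable hsq.aemeasurable).2 fun c ↦ ?_
  have hcompl : {x : ℝ | c ≤ x ^ 2} = (Ioo (-√c) √c)ᶜ := by
    ext x
    rw [mem_ofPred_eq, mem_compl_iff, mem_Ioo, ← Real.sq_lt, not_lt]
  rw [hcompl, prob_compl_eq_one_sub measurableSet_Ioo, prob_compl_eq_one_sub measurableSet_Ioo]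
  exact tsub_le_tsub_left (gaussianReal_Ioo_neg_self_anti h v √c) 1

theorem stmt14_general {ι : Type*} [Fintype ι] {m m' : ι → ℝ} (h : ∀ i, |m i| ≤ |m' i|)
    (v : ι → ℝ≥0) (c : ℝ) :
    (Measure.pi fun i ↦ gaussianReal (m i) (v i)) {x : ι → ℝ | c ≤ ∑ i, x i ^ 2} ≤
      (Measure.pi fun i ↦ gaussianReal (m' i) (v i)) {x : ι → ℝ | c ≤ ∑ i, x i ^ 2} :=
  measure_pi_le_sum_mono (fun _ ↦ by fun_prop)
    (fun i ↦ stochasticLE_map_sq_gaussianReal (h i) (v i)) c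

/-- Lemma (anti-concentration of the noncentral chi-square distribution): if `X₁, …, X_k` are
iid `N(0,σ²)` and `Y₁, …, Y_k` are iid `N(μ,σ²)`, then for every `t`,
`ℙ(Σ Xᵢ² ≥ t²) ≤ ℙ(Σ Yᵢ² ≥ t²)`. -/
theorem stmt14 (k : ℕ) (μ σ : ℝ) (hσ : 0 < σ) (t : ℝ) :
    (Measure.pi fun _ : Fin k => gaussianReal 0 (Real.toNNReal (σ ^ 2)))
        {x : Fin k → ℝ | t ^ 2 ≤ ∑ i, (x i) ^ 2} ≤
      (Measure.pi fun _ : Fin k => gaussianReal μ (Real.toNNReal (σ ^ 2)))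
        {x : Fin k → ℝ | t ^ 2 ≤ ∑ i, (x i) ^ 2} :=
  stmt14_general (fun _ ↦ abs_zero.trans_le (abs_nonneg μ)) _ _
end

section
/- Let μ ∈ ℝ and σ > 0. Let X₀, X₁, …, X_n, Y₀ be independent N(0,σ²) random variables and Y₁, …, Y_n be independent N(μ,σ²) random variables, with Y₀, Y₁, …, Y_n independent. Then for every t ∈ (0,1), ℙ( Y₀²/(Y₀² + Σ_{i=1}^{n} Yᵢ²) ≥ t² ) ≤ ℙ( X₀²/(X₀² + Σ_{i=1}^{n} Xᵢ²) ≥ t² ). -/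
open MeasureTheory ProbabilityTheory

/-!
For `f` and `g` non-increasing functions of `‖x‖`, pairing the points `x` and `c - x` gives
`2 ∫ g(x) f(x - c) dx = ∫ (g(x) f(c - x) + g(c - x) f(x)) dx`, and by the rearrangement inequality
the integrand is at most `g(x) f(x) + g(c - x) f(c - x)`. Hence, among the normal laws of a given
variance, the centered one gives the largest mass to every interval symmetric about `0`. By Fubini's
theorem the means of independent normal variables may be set to zero one after the other, and no
such step decreases the probability of an event whose sections in that coordinate are symmetric
intervals. The event of the theorem has this property in every coordinate but the `0`-th one, which
is already centered.
-/

open Function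
open scoped ENNReal NNReal

/-- A function on a normed group is *radially antitone* if it is a non-increasing function of the
norm. On `ℝ` these are the even functions that are non-increasing on `[0, ∞)`, the class on which
normal laws are compared below. The codomain may be `Prop`: for a set `A`,
`RadiallyAntitone (· ∈ A)` says that `y ∈ A` and `‖x‖ ≤ ‖y‖` imply `x ∈ A`. -/
def RadiallyAntitone {E β : Type*} [Norm E] [LE β] (f : E → β) : Prop :=
  ∀ ⦃x y : E⦄, ‖x‖ ≤ ‖y‖ → f y ≤ f x

section Rearrangement

theorem mul_add_mul_le_mul_add_mul_of_canonicallyOrderedAdd {R : Type*}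
    [NonUnitalNonAssocSemiring R] [LE R] [CanonicallyOrderedAdd R] {a b c d : R}
    (hab : a ≤ b) (hcd : c ≤ d) : a * d + b * c ≤ a * c + b * d := by
  obtain ⟨e, rfl⟩ := exists_add_of_le hab
  obtain ⟨k, rfl⟩ := exists_add_of_le hcd
  have expand : a * c + (a + e) * (c + k) = a * (c + k) + (a + e) * c + e * k := by
    simp only [mul_add, add_mul]
    abel
  exact expand ▸ le_self_add

namespace RadiallyAntitone

theorem eq_of_norm_eq {E β : Type*} [Norm E] [PartialOrder β] {f : E → β}
    (hf : RadiallyAntitone f) {x y : E} (h : ‖x‖ = ‖y‖) : f x = f y :=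
  le_antisymm (hf h.ge) (hf h.le)

theorem mul_add_mul_le {E R : Type*} [Norm E] [NonUnitalNonAssocSemiring R] [LE R]
    [CanonicallyOrderedAdd R] {f g : E → R} (hf : RadiallyAntitone f) (hg : RadiallyAntitone g)
    (x y : E) : g x * f y + g y * f x ≤ g x * f x + g y * f y := by
  rcases le_total ‖x‖ ‖y‖ with h | h
  · rw [add_comm, add_comm (g x * f x)]
    exact mul_add_mul_le_mul_add_mul_of_canonicallyOrderedAdd (hg h) (hf h)
  · exact mul_add_mul_le_mul_add_mul_of_canonicallyOrderedAdd (hg h) (hf h)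

theorem indicator_one {E R : Type*} [Norm E] [Zero R] [One R] [Preorder R] [ZeroLEOneClass R]
    {A : Set E} (hA : RadiallyAntitone (· ∈ A)) : RadiallyAntitone (A.indicator (1 : E → R)) := by
  intro x y hxy
  by_cases hy : y ∈ A
  · rw [Set.indicator_of_mem hy, Set.indicator_of_mem (hA hxy hy), Pi.one_apply, Pi.one_apply]
  · rw [Set.indicator_of_notMem hy]
    exact Set.indicator_nonneg (fun _ _ => zero_le_one) x

end RadiallyAntitone

end Rearrangement

section Translation

theorem lintegral_add_lintegral_self_eq_lintegral_add_comp_sub_left {G : Type*} [AddGroup G]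
    [MeasurableSpace G] [MeasurableAdd G] [MeasurableNeg G] {μ : Measure G}
    [μ.IsAddLeftInvariant] [μ.IsNegInvariant] {f : G → ℝ≥0∞} (hf : Measurable f) (c : G) :
    ∫⁻ x, f x ∂μ + ∫⁻ x, f x ∂μ = ∫⁻ x, (f x + f (c - x)) ∂μ := by
  rw [lintegral_add_left hf, lintegral_sub_left_eq_self]

theorem RadiallyAntitone.lintegral_mul_comp_sub_le {E : Type*} [SeminormedAddCommGroup E]
    [MeasurableSpace E] [MeasurableAdd E] [MeasurableNeg E] {μ : Measure E}
    [μ.IsAddLeftInvariant] [μ.IsNegInvariant] {f g : E → ℝ≥0∞}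
    (hf : RadiallyAntitone f) (hg : RadiallyAntitone g) (hfm : Measurable f) (hgm : Measurable g)
    (c : E) : ∫⁻ x, g x * f (x - c) ∂μ ≤ ∫⁻ x, g x * f x ∂μ := by
  have doubled : ∫⁻ x, g x * f (x - c) ∂μ + ∫⁻ x, g x * f (x - c) ∂μ ≤
      ∫⁻ x, g x * f x ∂μ + ∫⁻ x, g x * f x ∂μ := by
    rw [lintegral_add_lintegral_self_eq_lintegral_add_comp_sub_left (by fun_prop) c,
      lintegral_add_lintegral_self_eq_lintegral_add_comp_sub_left (by fun_prop) c]
    refine lintegral_mono fun x => ?_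
    have swap : f (x - c) = f (c - x) := hf.eq_of_norm_eq (norm_sub_rev x c)
    have reflect : f (c - x - c) = f x := hf.eq_of_norm_eq (by simp)
    rw [swap, reflect]
    exact hf.mul_add_mul_le hg x (c - x)
  by_contra! h
  exact (ENNReal.add_lt_add h h).not_ge doubled

end Translation

section Gaussian

theorem gaussianPDF_sub (m : ℝ) (v : ℝ≥0) (x y : ℝ) :
    gaussianPDF m v (x - y) = gaussianPDF (m + y) v x := by
  simp only [gaussianPDF, gaussianPDFReal_sub]

theorem radiallyAntitone_gaussianPDF (v : ℝ≥0) : RadiallyAntitone (gaussianPDF 0 v) := by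
  intro x y hxy
  have sq_le : (x - 0) ^ 2 ≤ (y - 0) ^ 2 := by simpa only [sub_zero] using sq_le_sq.2 hxy
  unfold gaussianPDF gaussianPDFReal
  gcongr

theorem RadiallyAntitone.lintegral_gaussianReal_le {g : ℝ → ℝ≥0∞} (hg : RadiallyAntitone g)
    (hgm : Measurable g) (m : ℝ) {v : ℝ≥0} (hv : v ≠ 0) :
    ∫⁻ x, g x ∂gaussianReal m v ≤ ∫⁻ x, g x ∂gaussianReal 0 v := by
  have density (k : ℝ) :
      ∫⁻ x, g x ∂gaussianReal k v = ∫⁻ x, g x * gaussianPDF 0 v (x - k) := by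
    rw [gaussianReal_of_var_ne_zero k hv,
      lintegral_withDensity_eq_lintegral_mul _ (measurable_gaussianPDF k v) hgm]
    simp only [Pi.mul_apply, gaussianPDF_sub, zero_add, mul_comm]
  rw [density, density]
  simpa only [sub_zero] using (radiallyAntitone_gaussianPDF v).lintegral_mul_comp_sub_le hg
    (measurable_gaussianPDF 0 v) hgm m

end Gaussian

section Product

theorem lmarginal_le_lmarginal_of_forall_lintegral_le {ι : Type*} [DecidableEq ι] {X : ι → Type*}
    [∀ i, MeasurableSpace (X i)] {μ ν : ∀ i, Measure (X i)} [∀ i, SigmaFinite (μ i)]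
    [∀ i, SigmaFinite (ν i)] (r : ∀ i, X i → X i → Prop)
    (hμν : ∀ i, ∀ g : X i → ℝ≥0∞, Measurable g → (∀ ⦃a b⦄, r i a b → g b ≤ g a) →
      ∫⁻ a, g a ∂μ i ≤ ∫⁻ a, g a ∂ν i)
    {f : (∀ i, X i) → ℝ≥0∞} (hf : Measurable f)
    (hfr : ∀ i x ⦃a b⦄, r i a b → f (update x i b) ≤ f (update x i a)) (s : Finset ι) :
    ∫⋯∫⁻_s, f ∂μ ≤ ∫⋯∫⁻_s, f ∂ν := by
  induction s using Finset.induction_on with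
  | empty => simp only [lmarginal_empty, le_refl]
  | insert i s hi ih =>
    intro x
    have section_measurable : Measurable fun a => (∫⋯∫⁻_s, f ∂ν) (update x i a) :=
      (hf.lmarginal ν).comp (measurable_update x)
    have section_antitone ⦃a b : X i⦄ (hab : r i a b) :
        (∫⋯∫⁻_s, f ∂ν) (update x i b) ≤ (∫⋯∫⁻_s, f ∂ν) (update x i a) := by
      rw [lmarginal_update_of_notMem hf hi, lmarginal_update_of_notMem hf hi]
      exact lmarginal_mono (fun z => hfr i z hab) x
    calc (∫⋯∫⁻_insert i s, f ∂μ) x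
        = ∫⁻ a, (∫⋯∫⁻_s, f ∂μ) (update x i a) ∂μ i := lmarginal_insert f hf hi x
      _ ≤ ∫⁻ a, (∫⋯∫⁻_s, f ∂ν) (update x i a) ∂μ i := lintegral_mono fun a => ih _
      _ ≤ ∫⁻ a, (∫⋯∫⁻_s, f ∂ν) (update x i a) ∂ν i :=
        hμν i _ section_measurable section_antitone
      _ = (∫⋯∫⁻_insert i s, f ∂ν) x := (lmarginal_insert f hf hi x).symm

variable {ι : Type*} [Fintype ι] [DecidableEq ι]

theorem lintegral_pi_gaussianReal_le (m : ι → ℝ) {v : ι → ℝ≥0} (hv : ∀ i, v i ≠ 0)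
    {f : (ι → ℝ) → ℝ≥0∞} (hf : Measurable f)
    (hfm : ∀ i, m i ≠ 0 → ∀ x, RadiallyAntitone fun a => f (update x i a)) :
    ∫⁻ x, f x ∂Measure.pi (fun i => gaussianReal (m i) (v i)) ≤
      ∫⁻ x, f x ∂Measure.pi (fun i => gaussianReal 0 (v i)) := by
  rw [lintegral_eq_lmarginal_univ 0, lintegral_eq_lmarginal_univ 0]
  -- Coordinates that are already centered are compared by equality, which imposes nothing on `f`.
  refine lmarginal_le_lmarginal_of_forall_lintegral_le
    (fun i a b => ‖a‖ ≤ ‖b‖ ∧ (m i = 0 → a = b)) (fun i g hgm hg => ?_) hf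
    (fun i x a b hab => ?_) Finset.univ 0
  · by_cases hmi : m i = 0
    · rw [hmi]
    · have hg_radial : RadiallyAntitone g := fun a b hab => hg ⟨hab, fun h => absurd h hmi⟩
      exact hg_radial.lintegral_gaussianReal_le hgm (m i) (hv i)
  · by_cases hmi : m i = 0
    · rw [hab.2 hmi]
    · exact hfm i hmi x hab.1

theorem measure_pi_gaussianReal_le (m : ι → ℝ) {v : ι → ℝ≥0} (hv : ∀ i, v i ≠ 0)
    {B : Set (ι → ℝ)} (hB : MeasurableSet B)
    (hBm : ∀ i, m i ≠ 0 → ∀ x, RadiallyAntitone fun a => update x i a ∈ B) :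
    Measure.pi (fun i => gaussianReal (m i) (v i)) B ≤
      Measure.pi (fun i => gaussianReal 0 (v i)) B := by
  rw [← lintegral_indicator_one hB, ← lintegral_indicator_one hB]
  exact lintegral_pi_gaussianReal_le m hv (measurable_one.indicator hB) fun i hi x =>
    (hBm i hi x).indicator_one

end Product

section Ratio

variable {ι : Type*} [Fintype ι]

theorem radiallyAntitone_sq_div_sum_sq_update [DecidableEq ι] {i₀ i : ι} (hi : i ≠ i₀)
    (x : ι → ℝ) :
    RadiallyAntitone fun a => (update x i a i₀) ^ 2 / ∑ j, (update x i a j) ^ 2 := by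
  intro a b hab
  simp only [update_of_ne hi.symm]
  -- When `x i₀ = 0` the denominators may vanish, but then both quotients are `0`.
  rcases eq_or_ne (x i₀) 0 with h0 | h0
  · simp only [h0, ne_eq, OfNat.ofNat_ne_zero, not_false_eq_true, zero_pow, zero_div, le_refl]
  have sum_pos : 0 < ∑ j, (update x i a j) ^ 2 :=
    Finset.sum_pos' (fun j _ => sq_nonneg _)
      ⟨i₀, Finset.mem_univ i₀, by rw [update_of_ne hi.symm]; positivity⟩
  have sum_le : ∑ j, (update x i a j) ^ 2 ≤ ∑ j, (update x i b j) ^ 2 := by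
    refine Finset.sum_le_sum fun j _ => ?_
    rcases eq_or_ne j i with rfl | hj
    · simpa only [update_self] using sq_le_sq.2 hab
    · rw [update_of_ne hj, update_of_ne hj]
  exact div_le_div_of_nonneg_left (sq_nonneg _) sum_pos sum_le

theorem stmt15_general (i₀ : ι) (m : ι → ℝ) (hm : m i₀ = 0) {v : ι → ℝ≥0} (hv : ∀ i, v i ≠ 0)
    (s : ℝ) :
    Measure.pi (fun i => gaussianReal (m i) (v i)) {x | s ≤ x i₀ ^ 2 / ∑ i, x i ^ 2} ≤
      Measure.pi (fun i => gaussianReal 0 (v i)) {x | s ≤ x i₀ ^ 2 / ∑ i, x i ^ 2} := by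
  classical
  refine measure_pi_gaussianReal_le m hv (measurableSet_le (by fun_prop) (by fun_prop))
    fun i hi x a b hab hb => ?_
  have hne : i ≠ i₀ := fun h => hi (h ▸ hm)
  exact le_trans hb (radiallyAntitone_sq_div_sum_sq_update hne x hab)

end Ratio

/-- Lemma (comparison of ratios of noncentral and central chi-square variables): let
`X₀, X₁, …, X_n, Y₀ ∼ N(0,σ²)` and `Y₁, …, Y_n ∼ N(μ,σ²)` all be independent. Then for every
`t ∈ (0,1)`,
`ℙ(Y₀²/(Y₀² + Σᵢ Yᵢ²) ≥ t²) ≤ ℙ(X₀²/(X₀² + Σᵢ Xᵢ²) ≥ t²)`.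
(The `Y`-variables are modeled by the coordinates of a product measure whose `0`-th factor is
`N(0,σ²)` and whose other factors are `N(μ,σ²)`; the `X`-variables by the standard product of
`N(0,σ²)`.) -/
theorem stmt15 (n : ℕ) (μ σ : ℝ) (hσ : 0 < σ) (t : ℝ) (ht : t ∈ Set.Ioo (0 : ℝ) 1) :
    (Measure.pi fun i : Fin (n + 1) =>
        gaussianReal (if i = 0 then 0 else μ) (Real.toNNReal (σ ^ 2)))
        {x : Fin (n + 1) → ℝ |
          t ^ 2 ≤ (x 0) ^ 2 / ((x 0) ^ 2 + ∑ i : Fin n, (x i.succ) ^ 2)} ≤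
      (Measure.pi fun _ : Fin (n + 1) => gaussianReal 0 (Real.toNNReal (σ ^ 2)))
        {x : Fin (n + 1) → ℝ |
          t ^ 2 ≤ (x 0) ^ 2 / ((x 0) ^ 2 + ∑ i : Fin n, (x i.succ) ^ 2)} := by
  simpa only [Fin.sum_univ_succ] using stmt15_general (0 : Fin (n + 1))
    (fun i => if i = 0 then 0 else μ) (if_pos rfl)
    (fun _ => (Real.toNNReal_pos.2 (pow_pos hσ 2)).ne') (t ^ 2)
end
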